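/- arXiv:1609.00284 — 3 statements merged into one kernel-verified Lean document; each statement's English description precedes it below -/
import Mathlib

section
/- Let G be a finite simple 2-regular graph with n vertices such that every connected component of G is a cycle with more than k vertices. Then the number of k-element independent sets of vertices of G equals the number of k-element independent sets of vertices of the cycle C_n; in particular, this number depends only on k and n. -/
open SimpleGraph

/-- `SameDeck G G' k`: `G` and `G'` have the same `k`-deck, i.e. for every simple graph `H`
on `k` vertices, the number of `k`-element vertex subsets of `G` inducing a subgraph
isomorphic to `H` equals the corresponding number for `G'`. -/
def SameDeck {V W : Type*} [Fintype V] [Fintype W]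
    (G : SimpleGraph V) (G' : SimpleGraph W) (k : ℕ) : Prop :=
  ∀ H : SimpleGraph (Fin k),
    Set.ncard {s : Finset V | s.card = k ∧ Nonempty ((G.induce (↑s : Set V)) ≃g H)} =
    Set.ncard {s : Finset W | s.card = k ∧ Nonempty ((G'.induce (↑s : Set W)) ≃g H)}

/-- `copies G H = s(G,H)`, the number of vertex subsets of `G` whose induced subgraph is
isomorphic to `H`. -/
noncomputable def copies {V W : Type*} [Fintype V]
    (G : SimpleGraph V) (H : SimpleGraph W) : ℕ :=
  Set.ncard {s : Finset V | Nonempty ((G.induce (↑s : Set V)) ≃g H)}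

/-- The connected component `c` of `G` is a path on `m` vertices. -/
def CompIsPath {V : Type*} (G : SimpleGraph V) (c : G.ConnectedComponent) (m : ℕ) : Prop :=
  Nonempty ((G.induce c.supp) ≃g pathGraph m)

/-- The connected component `c` of `G` is a cycle on `m` vertices (`m ≥ 3`). -/
def CompIsCycle {V : Type*} (G : SimpleGraph V) (c : G.ConnectedComponent) (m : ℕ) : Prop :=
  3 ≤ m ∧ Nonempty ((G.induce c.supp) ≃g cycleGraph m)

/-- A linear forest: every connected component is a path. -/
def IsLinearForest {V : Type*} (G : SimpleGraph V) : Prop :=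
  ∀ c : G.ConnectedComponent, ∃ m : ℕ, CompIsPath G c m

/-!
A disjoint union of cycles is the graph joining each `v` to `σ v` for a permutation `σ`, and a set
is independent when it is disjoint from its image under `σ`. For `x` and `y` in different cycles,
multiplying `σ` by the transposition `(x y)` merges these two cycles. If both are longer than `k`,
then the pairs `σ ^ i {x, y}` with `i ≤ k` are pairwise disjoint, so a `k`-element set misses one of
them, and exchanging its elements between the two cycles along the pairs before the first missed
one turns independent sets of the merged permutation into independent sets of `σ`. Hence merging
long cycles does not change the number of independent `k`-sets, and they can all be merged into one.
-/

open scoped Pointwise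

section Action

open MulAction

variable {G α : Type*} [Group G] [MulAction G α]

/-- `t` is independent in the graph of the action of `g`, in which every `a` is joined to `g • a`.
A fixed point of `g` carries a loop, so it lies in no independent set. -/
def SMulIndep (g : G) (t : Set α) : Prop :=
  Disjoint t (g • t)

/-- The `k`-element independent sets of the graph joining every `a` to `g • a`. -/
def smulIndepSets (α : Type*) [MulAction G α] (g : G) (k : ℕ) : Set (Finset α) :=
  {t | t.card = k ∧ SMulIndep g (t : Set α)}

/-- The first `i` for which the translate `g ^ i • D` misses `t`, with junk value `0` if there is
none. -/
noncomputable def firstGap (g : G) (D t : Set α) : ℕ :=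
  sInf {i | Disjoint (g ^ i • D) t}

/-- The first `k` forward translates of `D` under `g` avoid `D`. -/
def TranslatesAvoid (g : G) (D : Set α) (k : ℕ) : Prop :=
  ∀ j, 0 < j → j ≤ k → Disjoint D (g ^ j • D)

/-- The element of `G` that follows `h` backwards for `i` steps and then `g` forwards for `i` steps.
It carries the independent sets with first gap `i` from one graph to the other. -/
def backForth (g h : G) (i : ℕ) : G :=
  g ^ i * (h ^ i)⁻¹

theorem smulIndep_smul_conj {g c : G} {t : Set α} :
    SMulIndep (c * g * c⁻¹) (c • t) ↔ SMulIndep g t := by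
  rw [SMulIndep, SMulIndep, smul_smul, inv_mul_cancel_right, mul_smul, Set.disjoint_smul_set]

theorem smul_set_eq_self_of_disjoint {s : G} {D t : Set α} (hs : s ∈ fixingSubgroup G Dᶜ)
    (hDt : Disjoint D t) : s • t = t :=
  fixingSubgroup_le_stabilizer G t
    (fixingSubgroup_antitone G α (Set.subset_compl_iff_disjoint_left.2 hDt) hs)

theorem smul_set_eq_self_of_mem_fixingSubgroup_compl {s : G} {D : Set α}
    (hs : s ∈ fixingSubgroup G Dᶜ) : s • D = D := by
  rw [← mem_stabilizer_iff, ← stabilizer_compl]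
  exact fixingSubgroup_le_stabilizer G _ hs

theorem smulIndep_conj_mul {g s c : G} {D t : Set α} (hs : s ∈ fixingSubgroup G Dᶜ)
    (hDt : Disjoint (c • D) t) : SMulIndep (c * s * c⁻¹ * g) t ↔ SMulIndep g t := by
  have hfix : (c * s * c⁻¹)⁻¹ • t = t := by
    rw [mul_inv_rev, mul_inv_rev, inv_inv, mul_smul, mul_smul,
      smul_set_eq_self_of_disjoint (inv_mem hs) (Set.disjoint_smul_set_left.1 hDt),
      smul_inv_smul]
  rw [SMulIndep, mul_smul, Set.disjoint_smul_set_right, hfix, SMulIndep]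

theorem backForth_conj (g s : G) (i : ℕ) :
    backForth g (s * g) i * (s * g) * (backForth g (s * g) i)⁻¹ = g ^ i * s * (g ^ i)⁻¹ * g := by
  have hcomm : ((s * g) ^ i)⁻¹ * (s * g) * (s * g) ^ i = s * g := by
    rw [mul_assoc, ← pow_succ', pow_succ, inv_mul_cancel_left]
  calc backForth g (s * g) i * (s * g) * (backForth g (s * g) i)⁻¹
      = g ^ i * (((s * g) ^ i)⁻¹ * (s * g) * (s * g) ^ i) * (g ^ i)⁻¹ := by
        simp only [backForth, mul_inv_rev, inv_inv, mul_assoc]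
    _ = g ^ i * s * (g ^ i)⁻¹ * g := by
        rw [hcomm, ← mul_assoc, mul_assoc _ g, (Commute.refl g).pow_right i |>.inv_right.eq,
          ← mul_assoc]

theorem smulIndep_backForth_smul {g s : G} {D t : Set α} {i : ℕ} (hs : s ∈ fixingSubgroup G Dᶜ)
    (hgap : Disjoint (g ^ i • D) (backForth g (s * g) i • t)) :
    SMulIndep g (backForth g (s * g) i • t) ↔ SMulIndep (s * g) t := by
  rw [← smulIndep_conj_mul hs hgap, ← backForth_conj, smulIndep_smul_conj]

namespace TranslatesAvoid

variable {g s : G} {D : Set α} {k i j : ℕ}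

theorem pairwiseDisjoint (hD : TranslatesAvoid g D k) :
    (Finset.range (k + 1) : Set ℕ).PairwiseDisjoint fun i => g ^ i • D := by
  have hlt : ∀ i j, i < j → j ≤ k → Disjoint (g ^ i • D) (g ^ j • D) := by
    intro i j hij hjk
    rw [← Nat.add_sub_of_le hij.le, pow_add, mul_smul, Set.disjoint_smul_set]
    exact hD _ (by lia) (by lia)
  intro i hi j hj hij
  rw [Finset.coe_range, Set.mem_Iio] at hi hj
  rcases hij.lt_or_gt with h | h
  · exact hlt i j h (by lia)
  · exact (hlt j i h (by lia)).symm

theorem smul_pow_smul (hD : TranslatesAvoid g D k) (hs : s ∈ fixingSubgroup G Dᶜ) (hj : j ≤ k) :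
    s • g ^ j • D = g ^ j • D := by
  rcases j.eq_zero_or_pos with rfl | hpos
  · rw [pow_zero, one_smul, smul_set_eq_self_of_mem_fixingSubgroup_compl hs]
  · exact smul_set_eq_self_of_disjoint hs (hD j hpos hj)

theorem smul_inv_pow_smul (hD : TranslatesAvoid g D k) (hs : s ∈ fixingSubgroup G Dᶜ)
    (hj : j ≤ k) : s • (g ^ j)⁻¹ • D = (g ^ j)⁻¹ • D := by
  rcases j.eq_zero_or_pos with rfl | hpos
  · rw [pow_zero, inv_one, one_smul, smul_set_eq_self_of_mem_fixingSubgroup_compl hs]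
  · refine smul_set_eq_self_of_disjoint hs ?_
    rw [Set.disjoint_smul_set_right, inv_inv]
    exact (hD j hpos hj).symm

theorem mul_pow_smul (hD : TranslatesAvoid g D k) (hs : s ∈ fixingSubgroup G Dᶜ) (hj : j ≤ k) :
    (s * g) ^ j • D = g ^ j • D := by
  induction j with
  | zero => rw [pow_zero, pow_zero]
  | succ j ih =>
    rw [pow_succ', mul_smul, ih (by lia), mul_smul, smul_smul g, ← pow_succ',
      hD.smul_pow_smul hs hj]

theorem mul_pow_inv_smul (hD : TranslatesAvoid g D k) (hs : s ∈ fixingSubgroup G Dᶜ)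
    (hj : j ≤ k) : ((s * g) ^ j)⁻¹ • D = (g ^ j)⁻¹ • D := by
  induction j with
  | zero => rw [pow_zero, pow_zero]
  | succ j ih =>
    have hsj : s⁻¹ • (g ^ j)⁻¹ • D = (g ^ j)⁻¹ • D :=
      hD.smul_inv_pow_smul (inv_mem hs) (by lia)
    rw [pow_succ, mul_inv_rev, mul_smul, ih (by lia), mul_inv_rev, mul_smul, hsj, smul_smul,
      ← mul_inv_rev, ← pow_succ]

theorem backForth_smul (hD : TranslatesAvoid g D k) (hs : s ∈ fixingSubgroup G Dᶜ) (hi : i ≤ k)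
    (hj : j ≤ i) : backForth g (s * g) i • g ^ j • D = g ^ j • D := by
  obtain ⟨l, rfl⟩ := Nat.exists_eq_add_of_le hj
  calc backForth g (s * g) (j + l) • g ^ j • D
      = g ^ (j + l) • ((s * g) ^ (j + l))⁻¹ • (s * g) ^ j • D := by
        rw [backForth, mul_smul, hD.mul_pow_smul hs (by lia)]
    _ = g ^ (j + l) • ((s * g) ^ l)⁻¹ • D := by
        rw [pow_add (s * g), mul_inv_rev, mul_smul _ ((s * g) ^ j)⁻¹, inv_smul_smul]
    _ = g ^ j • D := by
        rw [hD.mul_pow_inv_smul hs (by lia), pow_add, mul_smul, smul_inv_smul]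

theorem disjoint_backForth_smul (hD : TranslatesAvoid g D k) (hs : s ∈ fixingSubgroup G Dᶜ)
    (hi : i ≤ k) (hj : j ≤ i) (t : Set α) :
    Disjoint (g ^ j • D) (backForth g (s * g) i • t) ↔ Disjoint (g ^ j • D) t := by
  conv_lhs => rw [← hD.backForth_smul hs hi hj, Set.disjoint_smul_set]

theorem isLeast_gap_backForth_smul (hD : TranslatesAvoid g D k) (hs : s ∈ fixingSubgroup G Dᶜ)
    (hi : i ≤ k) (t : Set α) :
    IsLeast {j | Disjoint (g ^ j • D) (backForth g (s * g) i • t)} i ↔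
      IsLeast {j | Disjoint (g ^ j • D) t} i := by
  have hgap := fun j (hj : j ≤ i) => hD.disjoint_backForth_smul hs hi hj t
  simp only [IsLeast, mem_lowerBounds, Set.mem_ofPred_eq, hgap i le_rfl]
  refine and_congr_right fun _ => ⟨fun hmin j hj => ?_, fun hmin j hj => ?_⟩ <;>
    by_contra! hji
  · exact hji.not_ge (hmin j ((hgap j hji.le).2 hj))
  · exact hji.not_ge (hmin j ((hgap j hji.le).1 hj))

theorem exists_disjoint_pow_smul (hD : TranslatesAvoid g D k) (t : Finset α) (ht : t.card ≤ k) :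
    ∃ i ≤ k, Disjoint (g ^ i • D) t := by
  by_contra! hmeet
  have hle : (Finset.range (k + 1)).card ≤ t.card := by
    refine Finset.card_le_card_of_forall_subsingleton (fun i a => a ∈ g ^ i • D) ?_ ?_
    · intro i hi
      obtain ⟨a, haD, hat⟩ :=
        Set.not_disjoint_iff.1 (hmeet i (Nat.lt_succ_iff.1 (Finset.mem_range.1 hi)))
      exact ⟨a, hat, haD⟩
    · rintro a - i ⟨hi, hai⟩ j ⟨hj, haj⟩
      exact hD.pairwiseDisjoint.elim_set hi hj a hai haj
  rw [Finset.card_range] at hle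
  lia

theorem firstGap_eq_iff (hD : TranslatesAvoid g D k) {t : Finset α} (ht : t.card ≤ k) :
    firstGap g D t = i ↔ IsLeast {j | Disjoint (g ^ j • D) (t : Set α)} i := by
  obtain ⟨l, -, hl⟩ := hD.exists_disjoint_pow_smul t ht
  have hleast : IsLeast {j | Disjoint (g ^ j • D) (t : Set α)} (firstGap g D t) :=
    ⟨Nat.sInf_mem ⟨l, hl⟩, fun _ => Nat.sInf_le⟩
  exact ⟨fun h => h ▸ hleast, hleast.unique⟩

theorem firstGap_le (hD : TranslatesAvoid g D k) {t : Finset α} (ht : t.card ≤ k) :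
    firstGap g D t ≤ k := by
  obtain ⟨i, hik, hi⟩ := hD.exists_disjoint_pow_smul t ht
  exact (((hD.firstGap_eq_iff ht).1 rfl).2 hi).trans hik

section DecidableEq

variable [DecidableEq α]

theorem firstGap_backForth_smul_eq_iff (hD : TranslatesAvoid g D k)
    (hs : s ∈ fixingSubgroup G Dᶜ) (hi : i ≤ k) {t : Finset α} (ht : t.card ≤ k) :
    firstGap g D (backForth g (s * g) i • t : Finset α) = i ↔ firstGap g D t = i := by
  rw [hD.firstGap_eq_iff ((Finset.card_smul_finset _ t).trans_le ht), hD.firstGap_eq_iff ht,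
    Finset.coe_smul_finset, hD.isLeast_gap_backForth_smul hs hi]

theorem backForth_smul_mem_smulIndepSets_iff (hD : TranslatesAvoid g D k)
    (hs : s ∈ fixingSubgroup G Dᶜ) {t : Finset α} (ht : t.card ≤ k) (hi : firstGap g D t = i) :
    backForth g (s * g) i • t ∈ smulIndepSets α g k ↔ t ∈ smulIndepSets α (s * g) k := by
  have hik : i ≤ k := hi ▸ hD.firstGap_le ht
  have hmiss : Disjoint (g ^ i • D) (backForth g (s * g) i • (t : Set α)) :=
    (hD.disjoint_backForth_smul hs hik le_rfl _).2 ((hD.firstGap_eq_iff ht).1 hi).1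
  simp only [smulIndepSets, Set.mem_ofPred_eq, Finset.card_smul_finset, Finset.coe_smul_finset,
    smulIndep_backForth_smul hs hmiss]

end DecidableEq

theorem ncard_smulIndepSets_mul (hD : TranslatesAvoid g D k) (hs : s ∈ fixingSubgroup G Dᶜ) :
    (smulIndepSets α (s * g) k).ncard = (smulIndepSets α g k).ncard := by
  classical
  let exchange (t : Finset α) : Finset α := backForth g (s * g) (firstGap g D t) • t
  have hgap (t : Finset α) (ht : t.card ≤ k) : firstGap g D (exchange t) = firstGap g D t :=
    (hD.firstGap_backForth_smul_eq_iff hs (hD.firstGap_le ht) ht).2 rfl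
  refine Set.ncard_congr (fun t _ => exchange t) ?maps ?injective ?surjective
  case maps =>
    intro t ht
    exact (hD.backForth_smul_mem_smulIndepSets_iff hs ht.1.le rfl).2 ht
  case injective =>
    intro t u ht hu heq
    have hfirst : firstGap g D t = firstGap g D u := by
      rw [← hgap t ht.1.le, ← hgap u hu.1.le, heq]
    simp only [exchange, hfirst] at heq
    exact smul_left_cancel _ heq
  case surjective =>
    intro u hu
    obtain ⟨i, hi⟩ : ∃ i, firstGap g D u = i := ⟨_, rfl⟩
    obtain ⟨t, htu⟩ : ∃ t, backForth g (s * g) i • t = u := ⟨_, smul_inv_smul _ u⟩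
    have ht : t.card ≤ k := by rw [← hu.1, ← htu, Finset.card_smul_finset]
    have hfirst : firstGap g D t = i := by
      rw [← hD.firstGap_backForth_smul_eq_iff hs (hi ▸ hD.firstGap_le hu.1.le) ht, htu, hi]
    refine ⟨t, (hD.backForth_smul_mem_smulIndepSets_iff hs ht hfirst).1 (by rwa [htu]), ?_⟩
    simp only [exchange, hfirst, htu]

end TranslatesAvoid

theorem smulIndep_image_iff {H β : Type*} [Group H] [MulAction H β] {g : G} {h : H} (e : α ≃ β)
    (he : ∀ a, e (g • a) = h • e a) {t : Set α} : SMulIndep h (e '' t) ↔ SMulIndep g t := by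
  have himage : h • e '' t = e '' (g • t) := (Function.Semiconj.set_image he t).symm
  rw [SMulIndep, himage, Set.disjoint_image_iff e.injective, SMulIndep]

theorem ncard_smulIndepSets_congr {H β : Type*} [Group H] [MulAction H β] {g : G} {h : H}
    {k : ℕ} (e : α ≃ β) (he : ∀ a, e (g • a) = h • e a) :
    (smulIndepSets α g k).ncard = (smulIndepSets β h k).ncard := by
  refine Set.ncard_congr' (e.finsetCongr.subtypeEquiv fun t => ?_)
  change _ ∧ _ ↔ _ ∧ _
  rw [Equiv.finsetCongr_apply, Finset.card_map, Finset.coe_map, Equiv.coe_toEmbedding,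
    smulIndep_image_iff e he]

end Action

section Perm

open Equiv Equiv.Perm

variable {V : Type*} {σ τ : Perm V} {k : ℕ}

/-- Every cycle of `σ` has more than `k` elements, where a fixed point is a cycle of length `1`. An
infinite cycle has junk `ncard` equal to `0` and is therefore excluded. -/
def CyclesLongerThan (σ : Perm V) (k : ℕ) : Prop :=
  ∀ v, k < {w | σ.SameCycle v w}.ncard

theorem isCycleOn_setOf_sameCycle (σ : Perm V) (v : V) : σ.IsCycleOn {w | σ.SameCycle v w} := by
  refine ⟨σ.bijOn fun w => sameCycle_apply_right, fun u hu w hw => ?_⟩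
  exact hu.symm.trans hw

theorem CyclesLongerThan.mono [Finite V] (hσ : CyclesLongerThan σ k)
    (hle : SameCycle.setoid σ ≤ SameCycle.setoid τ) : CyclesLongerThan τ k :=
  fun v => (hσ v).trans_le (Set.ncard_le_ncard (fun _ hw => hle hw))

theorem CyclesLongerThan.pow_apply_ne (hσ : CyclesLongerThan σ k) {j : ℕ} (hj : 0 < j)
    (hjk : j ≤ k) (v : V) : (σ ^ j) v ≠ v := by
  have hfin : {w | σ.SameCycle v w}.Finite :=
    Set.finite_of_ncard_pos (k.zero_le.trans_lt (hσ v))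
  have hcycle : σ.IsCycleOn hfin.toFinset := by
    rw [hfin.coe_toFinset]
    exact isCycleOn_setOf_sameCycle σ v
  intro hfix
  have hdvd := (hcycle.pow_apply_eq (hfin.mem_toFinset.2 (SameCycle.refl σ v))).1 hfix
  have hlong := hσ v
  rw [Set.ncard_eq_toFinset_card _ hfin] at hlong
  exact (hlong.trans_le (Nat.le_of_dvd hj hdvd)).not_ge hjk

theorem CyclesLongerThan.translatesAvoid_pair (hσ : CyclesLongerThan σ k) {x y : V}
    (hxy : ¬σ.SameCycle x y) : TranslatesAvoid σ {x, y} k := by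
  intro j hj hjk
  have hne := hσ.pow_apply_ne hj hjk
  have hpow : ∀ v, σ.SameCycle v ((σ ^ j) v) := fun v => sameCycle_pow_right.2 (SameCycle.refl σ v)
  rw [← Set.image_smul, Set.image_pair, Set.disjoint_left]
  simp only [Set.mem_insert_iff, Set.mem_singleton_iff, Perm.smul_def]
  rintro a (rfl | rfl) (h | h)
  · exact hne _ h.symm
  · exact hxy (h ▸ hpow y).symm
  · exact hxy (h ▸ hpow x)
  · exact hne _ h.symm

theorem sameCycle_setoid_le_of_apply (h : ∀ v, τ.SameCycle v (σ v)) :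
    SameCycle.setoid σ ≤ SameCycle.setoid τ := by
  intro v w hvw
  obtain ⟨i, rfl⟩ := hvw
  induction i using Int.induction_on with
  | zero => exact SameCycle.refl _ _
  | succ i ih =>
    rw [add_comm, zpow_one_add, mul_apply]
    exact ih.trans (h _)
  | pred i ih =>
    have hback := h ((σ ^ (-i - 1 : ℤ)) v)
    rw [← mul_apply, ← zpow_one_add, add_sub_cancel] at hback
    exact ih.trans hback.symm

section DecidableEq

variable [DecidableEq V]

theorem swap_mem_fixingSubgroup_compl_pair (x y : V) :
    swap x y ∈ fixingSubgroup (Perm V) ({x, y}ᶜ : Set V) := by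
  rw [mem_fixingSubgroup_iff]
  intro z hz
  simp only [Set.mem_compl_iff, Set.mem_insert_iff, Set.mem_singleton_iff, not_or] at hz
  exact swap_apply_of_ne_of_ne hz.1 hz.2

theorem sameCycle_swap_mul_pow_apply {x y : V} (hxy : ¬σ.SameCycle x y) (j : ℕ) :
    (swap x y * σ).SameCycle y ((σ ^ j) y) := by
  induction j with
  | zero => exact SameCycle.refl _ _
  | succ j ih =>
    have hx : (σ ^ (j + 1)) y ≠ x := fun h =>
      hxy (h ▸ sameCycle_pow_right.2 (SameCycle.refl σ y)).symm
    rcases eq_or_ne ((σ ^ (j + 1)) y) y with hy | hy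
    · rw [hy]
    · rw [← sameCycle_apply_right, mul_apply, ← mul_apply σ, ← pow_succ',
        swap_apply_of_ne_of_ne hx hy] at ih
      exact ih

theorem sameCycle_swap_mul [Finite V] {x y : V} (hxy : ¬σ.SameCycle x y) :
    (swap x y * σ).SameCycle x y := by
  obtain ⟨j, hj⟩ : ∃ j : ℕ, (σ ^ j) y = σ.symm y :=
    SameCycle.exists_nat_pow_eq (sameCycle_apply_right.1 (by rw [σ.apply_symm_apply]))
  have h := sameCycle_apply_right.2 (sameCycle_swap_mul_pow_apply hxy j)
  rw [hj, mul_apply, σ.apply_symm_apply, swap_apply_right] at h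
  exact h.symm

theorem sameCycle_setoid_le_swap_mul [Finite V] {x y : V} (hxy : ¬σ.SameCycle x y) :
    SameCycle.setoid σ ≤ SameCycle.setoid (swap x y * σ) := by
  have hmerge := sameCycle_swap_mul hxy
  refine sameCycle_setoid_le_of_apply fun v => ?_
  have hv : (swap x y * σ).SameCycle v (swap x y (σ v)) :=
    sameCycle_apply_right.2 (SameCycle.refl _ v)
  rw [swap_apply_def] at hv
  split_ifs at hv with hx hy
  · exact hx ▸ hv.trans hmerge.symm
  · exact hy ▸ hv.trans hmerge
  · exact hv

end DecidableEq

theorem CyclesLongerThan.exists_isCycleOn_univ [Finite V] (hσ : CyclesLongerThan σ k) :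
    ∃ τ : Perm V, τ.IsCycleOn Set.univ ∧
      (smulIndepSets V τ k).ncard = (smulIndepSets V σ k).ncard := by
  classical
  let merged : Set (Perm V) :=
    {τ | CyclesLongerThan τ k ∧ (smulIndepSets V τ k).ncard = (smulIndepSets V σ k).ncard}
  obtain ⟨τ, ⟨hτ, hcount⟩, hmax⟩ :=
    (Set.toFinite merged).exists_maximalFor SameCycle.setoid merged ⟨σ, hσ, rfl⟩
  refine ⟨τ, ⟨Set.bijOn_univ.2 τ.bijective, fun x _ y _ => ?_⟩, hcount⟩
  by_contra hxy
  have hle := sameCycle_setoid_le_swap_mul hxy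
  have hswap : swap x y * τ ∈ merged :=
    ⟨hτ.mono hle, ((hτ.translatesAvoid_pair hxy).ncard_smulIndepSets_mul
      (swap_mem_fixingSubgroup_compl_pair x y)).trans hcount⟩
  exact hxy (hmax hswap hle (sameCycle_swap_mul hxy))

theorem isConj_of_isCycleOn_univ [Finite V] (hσ : σ.IsCycleOn Set.univ)
    (hτ : τ.IsCycleOn Set.univ) : IsConj σ τ := by
  classical
  cases nonempty_fintype V
  rcases subsingleton_or_nontrivial V with _ | _
  · rw [Subsingleton.elim σ τ]
  have hcycle {ρ : Perm V} (hρ : ρ.IsCycleOn Set.univ) : ρ.IsCycle :=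
    isCycle_iff_exists_isCycleOn.2
      ⟨Set.univ, Set.nontrivial_univ, hρ, fun _ _ => Set.mem_univ _⟩
  have hsupport {ρ : Perm V} (hρ : ρ.IsCycleOn Set.univ) : ρ.support = Finset.univ :=
    Finset.eq_univ_iff_forall.2 fun v =>
      mem_support.2 (hρ.apply_ne Set.nontrivial_univ (Set.mem_univ v))
  exact (hcycle hσ).isConj (hcycle hτ) (by rw [hsupport hσ, hsupport hτ])

theorem isCycleOn_univ_permCongr {W : Type*} (e : V ≃ W) (hσ : σ.IsCycleOn Set.univ) :
    (e.permCongr σ).IsCycleOn Set.univ := by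
  refine ⟨Set.bijOn_univ.2 (e.permCongr σ).bijective, fun x _ y _ => ?_⟩
  obtain ⟨i, hi⟩ := hσ.2 (Set.mem_univ (e.symm x)) (Set.mem_univ (e.symm y))
  refine ⟨i, ?_⟩
  rw [← e.permCongrHom_coe, ← map_zpow, e.permCongrHom_coe, e.permCongr_apply, hi,
    e.apply_symm_apply]

theorem isCycleOn_univ_finRotate (n : ℕ) : (finRotate n).IsCycleOn Set.univ := by
  rcases Nat.lt_or_ge n 2 with hn | hn
  · have : Subsingleton (Fin n) := Fin.subsingleton_iff_le_one.2 (by lia)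
    exact isCycleOn_of_subsingleton _ _
  · have hsupport : {i | finRotate n i ≠ i} = Set.univ := by
      rw [← coe_support_eq_set_support, support_finRotate_of_le hn, Finset.coe_univ]
    exact hsupport ▸ (isCycle_finRotate_of_le hn).isCycleOn

theorem ncard_smulIndepSets_finRotate [Fintype V] (hσ : σ.IsCycleOn Set.univ) {n : ℕ}
    (hn : Fintype.card V = n) :
    (smulIndepSets V σ k).ncard = (smulIndepSets (Fin n) (finRotate n) k).ncard := by
  let e : V ≃ Fin n := Fintype.equivFinOfCardEq hn
  obtain ⟨c, hc⟩ := isConj_iff.1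
    (isConj_of_isCycleOn_univ (isCycleOn_univ_permCongr e hσ) (isCycleOn_univ_finRotate n))
  refine ncard_smulIndepSets_congr (e.trans c) fun v => ?_
  simp [← hc]

end Perm

section Graph

variable {V : Type*} {G : SimpleGraph V} {σ : Equiv.Perm V} {k : ℕ}

/-- `G` is the graph joining every vertex `v` to `σ v`; thus `σ` rotates each cycle of `G` by one
step. -/
def IsRotation (G : SimpleGraph V) (σ : Equiv.Perm V) : Prop :=
  ∀ u v, G.Adj u v ↔ σ u = v ∨ σ v = u

theorem isRotation_cycleGraph {n : ℕ} (hn : n ≠ 1) :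
    IsRotation (cycleGraph n) (finRotate n) := by
  intro u v
  obtain ⟨m, rfl⟩ : ∃ m, n = m + 2 := ⟨n - 2, by have := u.pos; lia⟩
  rw [cycleGraph_adj, finRotate_apply, finRotate_apply, or_comm, sub_eq_iff_eq_add',
    sub_eq_iff_eq_add', eq_comm (a := v), eq_comm (a := u)]

theorem IsRotation.comap {W : Type*} {H : SimpleGraph W} {ρ : Equiv.Perm W} (hρ : IsRotation H ρ)
    (φ : G ≃g H) : IsRotation G (φ.symm.toEquiv.permCongr ρ) := by
  intro u v
  rw [← φ.map_adj_iff, hρ]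
  exact or_congr (φ.symm_apply_eq.symm) φ.symm_apply_eq.symm

theorem exists_isRotation_of_connectedComponents
    (h : ∀ c : G.ConnectedComponent, ∃ τ, IsRotation (G.induce c.supp) τ) :
    ∃ σ, IsRotation G σ := by
  choose τ hτ using h
  let σ : Equiv.Perm V :=
    (Equiv.sigmaFiberEquiv G.connectedComponentMk).permCongr (Equiv.sigmaCongrRight τ)
  have hσ (c : G.ConnectedComponent) (u : c.supp) : σ u = τ c u := by
    obtain ⟨u, rfl⟩ := u
    rfl
  have hcomp (u : V) : G.connectedComponentMk (σ u) = G.connectedComponentMk u :=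
    (τ (G.connectedComponentMk u) ⟨u, rfl⟩).2
  refine ⟨σ, fun u v => ?_⟩
  by_cases hc : G.connectedComponentMk u = G.connectedComponentMk v
  · have hτuv := hτ (G.connectedComponentMk v) ⟨u, hc⟩ ⟨v, rfl⟩
    rwa [induce_adj, Subtype.ext_iff, Subtype.ext_iff, ← hσ, ← hσ] at hτuv
  · refine iff_of_false (fun h => hc (ConnectedComponent.sound h.reachable)) ?_
    rintro (rfl | rfl)
    · exact hc (hcomp u).symm
    · exact hc (hcomp v)

namespace IsRotation

theorem sameCycle_of_reachable (hσ : IsRotation G σ) {u v : V} (huv : G.Reachable u v) :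
    σ.SameCycle u v := by
  obtain ⟨p⟩ := huv
  induction p with
  | nil => exact Equiv.Perm.SameCycle.refl _ _
  | @cons u v _ hadj _ ih =>
    rcases (hσ u v).1 hadj with rfl | rfl
    · exact Equiv.Perm.sameCycle_apply_left.1 ih
    · exact Equiv.Perm.sameCycle_apply_left.2 ih

theorem cyclesLongerThan [Finite V] (hσ : IsRotation G σ)
    (hk : ∀ c : G.ConnectedComponent, k < c.supp.ncard) : CyclesLongerThan σ k := fun v =>
  (hk (G.connectedComponentMk v)).trans_le <| Set.ncard_le_ncard fun _ hw =>
    hσ.sameCycle_of_reachable (ConnectedComponent.exact hw).symm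

theorem card_ne_one [Fintype V] (hσ : IsRotation G σ) : Fintype.card V ≠ 1 := by
  intro hV
  obtain ⟨v, hv⟩ := Fintype.card_eq_one_iff.1 hV
  exact G.irrefl ((hσ v v).2 (Or.inl (hv (σ v))))

theorem indepSets_eq (hσ : IsRotation G σ) :
    {s : Finset V | s.card = k ∧ ∀ u ∈ s, ∀ v ∈ s, ¬G.Adj u v} = smulIndepSets V σ k := by
  ext s
  refine and_congr_right fun _ => ?_
  rw [SMulIndep, Set.disjoint_right, ← Set.image_smul, Set.forall_mem_image]
  constructor
  · intro h u hu hσu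
    exact h u hu _ hσu ((hσ _ _).2 (Or.inl rfl))
  · intro h u hu v hv hadj
    rcases (hσ u v).1 hadj with rfl | rfl
    · exact h hu hv
    · exact h hv hu

end IsRotation

end Graph

/-- If `G` is a 2-regular graph with `n` vertices all of whose components
are cycles with more than `k` vertices, then the number of `k`-element independent sets
of `G` equals that of `C_n`; in particular it depends only on `k` and `n`. -/
theorem stmt_14 {V : Type*} [Fintype V] (k n : ℕ)
    (G : SimpleGraph V) (hn : Fintype.card V = n)
    (hreg : ∀ v, (G.neighborSet v).ncard = 2)
    (hcyc : ∀ c : G.ConnectedComponent, ∃ m, k < m ∧ CompIsCycle G c m) :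
    Set.ncard {s : Finset V | s.card = k ∧ ∀ u ∈ s, ∀ v ∈ s, ¬ G.Adj u v} =
    Set.ncard {s : Finset (Fin n) | s.card = k ∧ ∀ u ∈ s, ∀ v ∈ s, ¬ (cycleGraph n).Adj u v}
    := by
  obtain ⟨σ, hσ⟩ : ∃ σ, IsRotation G σ := by
    refine exists_isRotation_of_connectedComponents fun c => ?_
    obtain ⟨m, -, hm, ⟨φ⟩⟩ := hcyc c
    exact ⟨_, (isRotation_cycleGraph (by lia)).comap φ⟩
  have hlong : CyclesLongerThan σ k := hσ.cyclesLongerThan fun c => by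
    obtain ⟨m, hkm, -, ⟨φ⟩⟩ := hcyc c
    rwa [← Nat.card_coe_set_eq, Nat.card_congr φ.toEquiv, Nat.card_fin]
  obtain ⟨τ, hτ, hcount⟩ := hlong.exists_isCycleOn_univ
  rw [hσ.indepSets_eq, (isRotation_cycleGraph (hn ▸ hσ.card_ne_one)).indepSets_eq, ← hcount,
    ncard_smulIndepSets_finRotate hτ hn]
end

section
/- Let G be a finite simple graph with maximum degree at most 2, and let k ≥ 3. Then the number of connected components of G that are paths with at least k−1 vertices equals s(G, P_{k−1}) − s(G, P_k) − k·s(G, C_k). -/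
open SimpleGraph

/-!
Count induced embeddings `H ↪g G` instead of vertex subsets: each induced copy of `H` contributes
`|Aut H|` of them, that is `2` for a path and `2 * k` for the cycle `C_k`. Since degrees are at most
`2`, an induced path whose initial vertex is not a leaf of `G` has exactly one further neighbour
there, and prepending it produces an induced `P_k` or `C_k`; every embedding of `P_k` or `C_k`
arises exactly once in this way from an embedding of `P_{k-1}`. The remaining embeddings of
`P_{k-1}` start at a leaf of `G` and are determined by it. The component of a leaf is a path having
that leaf as an end, so these embeddings correspond to the ends of the path components with at
least `k-1` vertices, two for each component.
-/

section FiberCounting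

theorem ncard_eq_ncard_mul_of_ncard_fiber {α β : Type*} {s : Set α} {t : Set β} (hs : s.Finite)
    (ht : t.Finite) {f : α → β} {n : ℕ} (hf : Set.MapsTo f s t)
    (hn : ∀ b ∈ t, {a ∈ s | f a = b}.ncard = n) : s.ncard = t.ncard * n := by
  classical
  lift s to Finset α using hs
  lift t to Finset β using ht
  simp only [Set.ncard_coe_finset, Finset.mem_coe, ← Finset.coe_filter] at hn ⊢
  rw [Finset.card_eq_sum_card_fiberwise hf, Finset.sum_const_nat hn]

theorem eq_or_eq_of_encard_le_two {α : Type*} {s : Set α} (hs : s.encard ≤ 2) {a b c : α}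
    (ha : a ∈ s) (hb : b ∈ s) (hc : c ∈ s) (hab : a ≠ b) : c = a ∨ c = b := by
  have heq : {a, b} = s := (Set.toFinite {a, b}).eq_of_subset_of_encard_le
    (Set.pair_subset ha hb) (hs.trans_eq (Set.encard_pair hab).symm)
  simpa [← heq] using hc

end FiberCounting

section InducedPathsAndCycles

variable {V W : Type*} {G : SimpleGraph V} {H : SimpleGraph W}

section InducedCopies

instance [Finite V] [Finite W] : Finite (H ↪g G) := DFunLike.finite _

/-- Induced embeddings onto `s` are the same as isomorphisms onto the subgraph induced by `s`. -/
noncomputable def embeddingRangeEquivIso (G : SimpleGraph V) (H : SimpleGraph W) (s : Set V) :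
    {f : H ↪g G // Set.range f = s} ≃ (H ≃g G.induce s) where
  toFun f :=
    { toEquiv := (Equiv.ofInjective f.1 f.1.injective).trans (Equiv.setCongr f.2)
      map_rel_iff' := f.1.map_rel_iff }
  invFun e := ⟨(Embedding.induce s).comp e.toEmbedding, by
    ext v
    exact ⟨fun ⟨x, hx⟩ ↦ hx ▸ (e x).2, fun hv ↦ ⟨e.symm ⟨v, hv⟩, by simp⟩⟩⟩

theorem nonempty_induce_iso_iff {s : Set V} :
    Nonempty (G.induce s ≃g H) ↔ ∃ f : H ↪g G, Set.range f = s :=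
  ⟨fun ⟨e⟩ ↦ ⟨_, ((embeddingRangeEquivIso G H s).symm e.symm).2⟩,
    fun ⟨f, hf⟩ ↦ ⟨(embeddingRangeEquivIso G H s ⟨f, hf⟩).symm⟩⟩

theorem ncard_embedding_range_eq {s : Set V} (e : G.induce s ≃g H) :
    {f : H ↪g G | Set.range f = s}.ncard = Nat.card (H ≃g H) := by
  rw [← Nat.card_coe_set_eq]
  exact Nat.card_congr <| (embeddingRangeEquivIso G H s).trans <| RelIso.relIsoCongr (.refl _) e

theorem card_embedding_eq_copies_mul_card_iso [Fintype V] [Finite W] (G : SimpleGraph V)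
    (H : SimpleGraph W) : Nat.card (H ↪g G) = copies G H * Nat.card (H ≃g H) := by
  rw [← Set.ncard_univ, copies]
  refine ncard_eq_ncard_mul_of_ncard_fiber (f := fun f : H ↪g G ↦ (Set.range f).toFinite.toFinset)
    (Set.toFinite _) (Set.toFinite _) (fun f _ ↦ ?_) fun s ⟨e⟩ ↦ ?_
  · rw [Set.mem_ofPred_eq, Set.Finite.coe_toFinset]
    exact ⟨f.isoInduceRange.symm⟩
  · simpa only [Set.mem_univ, true_and, ← Finset.coe_inj, Set.Finite.coe_toFinset] using
      ncard_embedding_range_eq e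

end InducedCopies

section ConnectedComponents

theorem range_subset_supp_connectedComponentMk (hH : H.Preconnected) (f : H →g G) (x : W) :
    Set.range f ⊆ (G.connectedComponentMk (f x)).supp := by
  rintro _ ⟨y, rfl⟩
  exact ConnectedComponent.eq.2 ((hH y x).map f)

theorem supp_connectedComponentMk_eq_range (hH : H.Preconnected) (f : H →g G)
    (hf : ∀ x w, G.Adj (f x) w → w ∈ Set.range f) (x : W) :
    (G.connectedComponentMk (f x)).supp = Set.range f := by
  refine Set.Subset.antisymm (fun v hv ↦ ?_) (range_subset_supp_connectedComponentMk hH f x)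
  replace hv := (reachable_iff_reflTransGen _ _).1 (ConnectedComponent.eq.1 hv).symm
  induction hv with
  | refl => exact ⟨x, rfl⟩
  | tail _ hadj ih =>
    obtain ⟨y, rfl⟩ := ih
    exact hf y _ hadj

end ConnectedComponents

section Leaves

/-- A leaf: a vertex with exactly one neighbour. The leaves of a path with at least two vertices
are its two ends. -/
def IsLeaf (G : SimpleGraph V) (v : V) : Prop :=
  ∃! w, G.Adj v w

theorem IsLeaf.eq {v a b : V} (hv : IsLeaf G v) (ha : G.Adj v a) (hb : G.Adj v b) : a = b :=
  ExistsUnique.unique hv ha hb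

theorem IsLeaf.of_apply (f : H ↪g G) {x y : W} (hxy : H.Adj x y) (hx : IsLeaf G (f x)) :
    IsLeaf H x :=
  ⟨y, hxy, fun _ hz ↦ f.injective <| hx.eq (f.map_adj_iff.2 hz) (f.map_adj_iff.2 hxy)⟩

theorem isLeaf_apply_iff (f : H ↪g G) {x : W} (hf : ∀ w, G.Adj (f x) w → w ∈ Set.range f) :
    IsLeaf G (f x) ↔ IsLeaf H x := by
  constructor
  · intro hx
    obtain ⟨w, hw⟩ := hx.exists
    obtain ⟨y, rfl⟩ := hf w hw
    exact hx.of_apply f (f.map_adj_iff.1 hw)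
  · rintro ⟨y, hy, huniq⟩
    refine ⟨f y, f.map_adj_iff.2 hy, fun w hw ↦ ?_⟩
    obtain ⟨z, rfl⟩ := hf w hw
    rw [huniq z (f.map_adj_iff.1 hw)]

theorem mem_range_of_adj (f : H ↪g G) {x y : W} (hfx : (G.neighborSet (f x)).encard ≤ 2)
    (hxy : H.Adj x y) (hx : IsLeaf H x → IsLeaf G (f x)) {w : V} (hw : G.Adj (f x) w) :
    w ∈ Set.range f := by
  by_cases hleaf : IsLeaf H x
  · exact ⟨y, (hx hleaf).eq (f.map_adj_iff.2 hxy) hw⟩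
  · obtain ⟨z, hxz, hzy⟩ : ∃ z, H.Adj x z ∧ z ≠ y := by
      by_contra! huniq
      exact hleaf ⟨y, hxy, huniq⟩
    rcases eq_or_eq_of_encard_le_two hfx (f.map_adj_iff.2 hxy) (f.map_adj_iff.2 hxz) hw
      (f.injective.ne hzy.symm) with rfl | rfl
    exacts [⟨y, rfl⟩, ⟨z, rfl⟩]

theorem isLeaf_pathGraph_iff {n : ℕ} {i : Fin (n + 2)} :
    IsLeaf (pathGraph (n + 2)) i ↔ i = 0 ∨ i = Fin.last (n + 1) := by
  constructor
  · intro hi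
    by_contra! hne
    obtain ⟨hpos, hlt⟩ : 0 < i.val ∧ i.val < n + 1 := by
      simp only [ne_eq, Fin.ext_iff, Fin.val_zero, Fin.val_last] at hne
      omega
    have := hi.eq (a := ⟨i - 1, by omega⟩) (b := ⟨i + 1, by omega⟩)
      (pathGraph_adj.2 <| Or.inr <| Nat.sub_add_cancel hpos) (pathGraph_adj.2 <| Or.inl rfl)
    simp only [Fin.mk.injEq] at this
    omega
  · rintro (rfl | rfl)
    · refine ⟨1, by simp [pathGraph_adj], fun j hj ↦ ?_⟩
      simp only [pathGraph_adj, Fin.val_zero] at hj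
      exact Fin.ext (by simp only [Fin.val_one]; omega)
    · refine ⟨⟨n, by omega⟩, by simp [pathGraph_adj], fun j hj ↦ ?_⟩
      have := j.isLt
      simp only [pathGraph_adj, Fin.val_last] at hj
      exact Fin.ext (by simp only; omega)

theorem not_isLeaf_cycleGraph {n : ℕ} (i : Fin (n + 3)) : ¬ IsLeaf (cycleGraph (n + 3)) i := by
  intro hi
  have h : i + 1 = i - 1 := hi.eq (by simp [cycleGraph_adj]) (by simp [cycleGraph_adj])
  rw [sub_eq_add_neg, add_right_inj, eq_neg_iff_add_eq_zero] at h
  exact absurd h (ne_of_beq_false rfl)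

theorem not_isLeaf_embedding_cycleGraph {n : ℕ} (f : cycleGraph (n + 3) ↪g G) (i : Fin (n + 3)) :
    ¬ IsLeaf G (f i) :=
  fun hi ↦ not_isLeaf_cycleGraph i <| hi.of_apply f (y := i + 1) (by simp [cycleGraph_adj])

end Leaves

section Paths

theorem exists_pathGraph_adj {n : ℕ} (i : Fin (n + 2)) : ∃ j, (pathGraph (n + 2)).Adj i j :=
  (pathGraph_preconnected _).exists_adj_of_nontrivial i

/-- The reversal automorphism of a path. -/
def pathGraphRev (n : ℕ) : pathGraph n ≃g pathGraph n where
  toEquiv := Fin.revPerm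
  map_rel_iff' := by
    intro i j
    simp only [Fin.revPerm_apply, pathGraph_adj, Fin.val_rev]
    omega

@[simp]
theorem pathGraphRev_apply {n : ℕ} (i : Fin n) : pathGraphRev n i = i.rev :=
  rfl

/-- The inclusion of a path as an initial segment of a longer one. -/
def pathGraphCastLE {m n : ℕ} (h : m ≤ n) : pathGraph m ↪g pathGraph n where
  toEmbedding := Fin.castLEEmb h
  map_rel_iff' := by simp [pathGraph_adj]

/-- The inclusion of a path as a final segment of the path with one more vertex. -/
def pathGraphSucc (n : ℕ) : pathGraph n ↪g pathGraph (n + 1) where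
  toEmbedding := Fin.succEmb n
  map_rel_iff' := by simp [pathGraph_adj]

theorem cycleGraph_adj_iff_val {n : ℕ} {i j : Fin (n + 3)} :
    (cycleGraph (n + 3)).Adj i j ↔ i.val + 1 = j.val ∨ j.val + 1 = i.val ∨
      (i.val = 0 ∧ j.val = n + 2) ∨ (j.val = 0 ∧ i.val = n + 2) := by
  have hij := Fin.intCast_val_sub_eq_sub_add_ite i j
  have hji := Fin.intCast_val_sub_eq_sub_add_ite j i
  rw [cycleGraph_adj']
  simp only [Fin.le_def] at hij hji
  split_ifs at hij hji <;> omega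

/-- The inclusion of a path as the complement of the vertex `0` of a cycle. -/
def cycleGraphSucc (n : ℕ) : pathGraph (n + 2) ↪g cycleGraph (n + 3) where
  toEmbedding := Fin.succEmb (n + 2)
  map_rel_iff' := by simp [pathGraph_adj, cycleGraph_adj_iff_val]

theorem pathGraph_adj_zero_succ {n : ℕ} {i : Fin (n + 1)} :
    (pathGraph (n + 2)).Adj 0 i.succ ↔ i = 0 := by
  simp [pathGraph_adj, eq_comm]

theorem cycleGraph_adj_zero_succ {n : ℕ} {i : Fin (n + 2)} :
    (cycleGraph (n + 3)).Adj 0 i.succ ↔ i = 0 ∨ i = Fin.last (n + 1) := by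
  simp only [cycleGraph_adj_iff_val, Fin.ext_iff, Fin.val_succ, Fin.val_zero, Fin.val_last,
    true_and]
  omega

theorem encard_neighborSet_cycleGraph_le_two {n : ℕ} (i : Fin (n + 2)) :
    ((cycleGraph (n + 2)).neighborSet i).encard ≤ 2 :=
  cycleGraph_neighborSet ▸ Set.encard_insert_le _ _ |>.trans_eq (by norm_num)

theorem encard_neighborSet_pathGraph_le_two {n : ℕ} (i : Fin (n + 2)) :
    ((pathGraph (n + 2)).neighborSet i).encard ≤ 2 :=
  (Set.encard_le_encard fun _ h ↦ pathGraph_le_cycleGraph h).trans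
    (encard_neighborSet_cycleGraph_le_two i)

end Paths

section Automorphisms

theorem pathGraph_hom_ext (hG : ∀ v, (G.neighborSet v).encard ≤ 2) {n : ℕ}
    {f g : pathGraph (n + 2) →g G} (hf : Function.Injective f) (hg : Function.Injective g)
    (h0 : f 0 = g 0) (h1 : f 1 = g 1) : f = g := by
  have hpair (i : ℕ) (hi : i + 1 < n + 2) :
      f ⟨i, by omega⟩ = g ⟨i, by omega⟩ ∧ f ⟨i + 1, hi⟩ = g ⟨i + 1, hi⟩ := by
    induction i with
    | zero => exact ⟨h0, h1⟩
    | succ i ih =>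
      obtain ⟨heq, heq'⟩ := ih (by omega)
      have hback : G.Adj (f ⟨i + 1, by omega⟩) (f ⟨i, by omega⟩) :=
        f.map_adj (pathGraph_adj.2 <| Or.inr rfl)
      have hfwd : G.Adj (f ⟨i + 1, by omega⟩) (f ⟨i + 2, hi⟩) :=
        f.map_adj (pathGraph_adj.2 <| Or.inl rfl)
      have hfwd' : G.Adj (f ⟨i + 1, by omega⟩) (g ⟨i + 2, hi⟩) :=
        heq' ▸ g.map_adj (pathGraph_adj.2 <| Or.inl rfl)
      refine ⟨heq', ?_⟩
      rcases eq_or_eq_of_encard_le_two (hG _) hback hfwd hfwd' (hf.ne (by simp)) with hgi | hgi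
      · exact absurd (hgi.trans heq) (hg.ne (by simp))
      · exact hgi.symm
  ext ⟨i, hi⟩
  cases i with
  | zero => exact h0
  | succ i => exact (hpair i hi).2

theorem pathGraph_embedding_ext_of_isLeaf (hG : ∀ v, (G.neighborSet v).encard ≤ 2) {n : ℕ}
    {f g : pathGraph (n + 2) ↪g G} (hf : IsLeaf G (f 0)) (h0 : f 0 = g 0) : f = g := by
  have hadj (e : pathGraph (n + 2) ↪g G) : G.Adj (e 0) (e 1) :=
    e.map_adj_iff.2 (by simp [pathGraph_adj])
  have h1 : f 1 = g 1 := hf.eq (hadj f) (h0 ▸ hadj g)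
  have := pathGraph_hom_ext (f := f.toHom) (g := g.toHom) hG f.injective g.injective h0 h1
  exact DFunLike.ext _ _ fun i ↦ DFunLike.congr_fun this i

theorem card_pathGraph_iso (n : ℕ) : Nat.card (pathGraph (n + 2) ≃g pathGraph (n + 2)) = 2 := by
  have hleaf (φ : pathGraph (n + 2) ≃g pathGraph (n + 2)) : φ 0 = 0 ∨ φ 0 = Fin.last (n + 1) :=
    isLeaf_pathGraph_iff.1 <| (isLeaf_apply_iff φ.toEmbedding fun w _ ↦ φ.surjective w).2 <|
      isLeaf_pathGraph_iff.2 (.inl rfl)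
  have hinj : Function.Injective fun φ : pathGraph (n + 2) ≃g pathGraph (n + 2) ↦ φ 0 := by
    intro φ ψ h
    have := pathGraph_embedding_ext_of_isLeaf (f := φ.toEmbedding) (g := ψ.toEmbedding)
      encard_neighborSet_pathGraph_le_two (isLeaf_pathGraph_iff.2 (hleaf φ)) h
    exact DFunLike.ext _ _ fun i ↦ DFunLike.congr_fun this i
  rw [← Set.ncard_range_of_injective hinj, Set.ncard_eq_two]
  refine ⟨0, Fin.last (n + 1), Fin.last_pos.ne, Set.Subset.antisymm ?_ ?_⟩
  · rintro _ ⟨φ, rfl⟩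
    exact hleaf φ
  · rintro _ (rfl | rfl)
    exacts [⟨RelIso.refl _, rfl⟩, ⟨pathGraphRev _, Fin.rev_zero _⟩]

theorem cycleGraph_iso_ext {n : ℕ} {φ ψ : cycleGraph (n + 2) ≃g cycleGraph (n + 2)}
    (h0 : φ 0 = ψ 0) (h1 : φ 1 = ψ 1) : φ = ψ := by
  let ι : pathGraph (n + 2) →g cycleGraph (n + 2) := .ofLE pathGraph_le_cycleGraph
  have := pathGraph_hom_ext (f := φ.toHom.comp ι) (g := ψ.toHom.comp ι)
    encard_neighborSet_cycleGraph_le_two φ.injective ψ.injective h0 h1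
  exact DFunLike.ext _ _ fun i ↦ DFunLike.congr_fun this i

/-- The dihedral symmetry `x ↦ a ± x` of a cycle: a rotation for the sign `1`, a reflection for
the sign `-1`. -/
def cycleGraphDihedral (n : ℕ) (a : Fin (n + 2)) (ε : ℤˣ) :
    cycleGraph (n + 2) ≃g cycleGraph (n + 2) where
  toEquiv := (MulAction.toPerm ε).trans (Equiv.addLeft a)
  map_rel_iff' := by
    intro x y
    rcases Int.units_eq_one_or ε with rfl | rfl <;> simp [cycleGraph_adj, neg_add_eq_sub, or_comm]

@[simp]
theorem cycleGraphDihedral_apply {n : ℕ} (a x : Fin (n + 2)) (ε : ℤˣ) :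
    cycleGraphDihedral n a ε x = a + ε • x :=
  rfl

theorem cycleGraphDihedral_injective (n : ℕ) :
    Function.Injective fun p : Fin (n + 3) × ℤˣ ↦ cycleGraphDihedral (n + 1) p.1 p.2 := by
  rintro ⟨a, ε⟩ ⟨b, δ⟩ h
  have hab : a = b := by simpa using DFunLike.congr_fun h 0
  have hεδ : ε • (1 : Fin (n + 3)) = δ • 1 := by simpa [hab] using DFunLike.congr_fun h 1
  have hne : (1 : Fin (n + 3)) ≠ -1 := by
    rw [ne_eq, eq_neg_iff_add_eq_zero]
    exact ne_of_beq_false rfl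
  rw [Prod.mk.injEq]
  refine ⟨hab, ?_⟩
  rcases Int.units_eq_one_or ε with rfl | rfl <;> rcases Int.units_eq_one_or δ with rfl | rfl
  · rfl
  · exact absurd (by simpa using hεδ) hne
  · exact absurd (by simpa using hεδ.symm) hne
  · rfl

theorem cycleGraphDihedral_surjective (n : ℕ) :
    Function.Surjective fun p : Fin (n + 2) × ℤˣ ↦ cycleGraphDihedral n p.1 p.2 := by
  intro φ
  have hadj : (cycleGraph (n + 2)).Adj (φ 0) (φ 1) := φ.map_adj_iff.2 (by simp [cycleGraph_adj])
  obtain ⟨ε, hε⟩ : ∃ ε : ℤˣ, φ 1 = φ 0 + ε • 1 := by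
    rcases hadj with h | h
    · exact ⟨-1, by simp [sub_eq_iff_eq_add'.1 h]⟩
    · exact ⟨1, by simpa using sub_eq_iff_eq_add'.1 h⟩
  exact ⟨(φ 0, ε), cycleGraph_iso_ext (by simp) (by simp [hε])⟩

theorem card_cycleGraph_iso (n : ℕ) :
    Nat.card (cycleGraph (n + 3) ≃g cycleGraph (n + 3)) = 2 * (n + 3) := by
  rw [← Nat.card_eq_of_bijective _
    ⟨cycleGraphDihedral_injective n, cycleGraphDihedral_surjective (n + 1)⟩]
  simp [mul_comm]

end Automorphisms

section Extension

theorem exists_embedding_comp_eq {n : ℕ} {P : SimpleGraph (Fin n)} {K : SimpleGraph (Fin (n + 1))}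
    (s : P ↪g K) (hs : ∀ i, s i = i.succ) (f : P ↪g G) {w : V} (hw : w ∉ Set.range f)
    (hadj : ∀ i, G.Adj w (f i) ↔ K.Adj 0 i.succ) : ∃ g : K ↪g G, g.comp s = f := by
  refine ⟨⟨⟨Fin.cons w f, Fin.cons_injective_iff.2 ⟨hw, f.injective⟩⟩, ?_⟩, ?_⟩
  · intro i j
    cases i using Fin.cases with
    | zero =>
      cases j using Fin.cases with
      | zero => simp
      | succ j => exact hadj j
    | succ i =>
      cases j using Fin.cases with
      | zero => exact (G.adj_comm _ _).trans <| (hadj i).trans <| K.adj_comm _ _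
      | succ j => exact f.map_adj_iff.trans <| by rw [← hs, ← hs, s.map_adj_iff]
  · exact DFunLike.ext _ _ fun i ↦ congrArg (Fin.cons w f) (hs i)

theorem exists_pathGraph_or_cycleGraph_extension (hG : ∀ v, (G.neighborSet v).encard ≤ 2) {n : ℕ}
    (f : pathGraph (n + 2) ↪g G) (hf : ¬ IsLeaf G (f 0)) :
    (∃ g : pathGraph (n + 3) ↪g G, g.comp (pathGraphSucc (n + 2)) = f) ∨
      ∃ g : cycleGraph (n + 3) ↪g G, g.comp (cycleGraphSucc n) = f := by
  obtain ⟨w, hw, hw1⟩ : ∃ w, G.Adj (f 0) w ∧ w ≠ f 1 := by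
    by_contra! huniq
    exact hf ⟨f 1, f.map_adj_iff.2 (by simp [pathGraph_adj]), huniq⟩
  have hrange : w ∉ Set.range f := by
    rintro ⟨j, rfl⟩
    have hj := f.map_adj_iff.1 hw
    simp only [pathGraph_adj, Fin.val_zero] at hj
    exact hw1 (congrArg f (Fin.ext (by simp only [Fin.val_one]; omega)))
  -- An inner vertex of the path already has its two neighbours on the path.
  have hends {i : Fin (n + 2)} (hi : G.Adj w (f i)) : i = 0 ∨ i = Fin.last (n + 1) := by
    obtain ⟨j, hj⟩ := exists_pathGraph_adj i
    by_contra hne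
    exact hrange <| mem_range_of_adj f (hG _) hj
      (fun hleaf ↦ absurd (isLeaf_pathGraph_iff.1 hleaf) hne) hi.symm
  by_cases hlast : G.Adj w (f (Fin.last (n + 1)))
  · refine .inr <| exists_embedding_comp_eq _ (fun _ ↦ rfl) f hrange fun i ↦ ?_
    rw [cycleGraph_adj_zero_succ]
    exact ⟨hends, by rintro (rfl | rfl); exacts [hw.symm, hlast]⟩
  · refine .inl <| exists_embedding_comp_eq _ (fun _ ↦ rfl) f hrange fun i ↦ ?_
    rw [pathGraph_adj_zero_succ]
    exact ⟨fun hi ↦ (hends hi).resolve_right (by rintro rfl; exact hlast hi),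
      by rintro rfl; exact hw.symm⟩

theorem pathGraph_hom_ext_succ (hG : ∀ v, (G.neighborSet v).encard ≤ 2) {n : ℕ}
    {f g : pathGraph (n + 3) →g G} (hf : Function.Injective f) (hg : Function.Injective g)
    (h : ∀ i : Fin (n + 2), f i.succ = g i.succ) : f = g := by
  have hne (i : Fin (n + 3)) (hi : i ≠ 0) : f i = g i := by
    obtain ⟨j, rfl⟩ := Fin.exists_succ_eq.2 hi
    exact h j
  have hrev := pathGraph_hom_ext (f := f.comp (pathGraphRev (n + 3)).toHom)
    (g := g.comp (pathGraphRev (n + 3)).toHom) hG (hf.comp (pathGraphRev _).injective)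
    (hg.comp (pathGraphRev _).injective) (hne _ (by simp)) (hne _ (by simp [Fin.ext_iff]))
  exact DFunLike.ext _ _ fun i ↦ by simpa using DFunLike.congr_fun hrev i.rev

theorem comp_pathGraphSucc_injective (hG : ∀ v, (G.neighborSet v).encard ≤ 2) (n : ℕ) :
    Function.Injective fun g : pathGraph (n + 3) ↪g G ↦ g.comp (pathGraphSucc (n + 2)) := by
  intro g h hgh
  have := pathGraph_hom_ext_succ (f := g.toHom) (g := h.toHom) hG g.injective h.injective
    fun i ↦ DFunLike.congr_fun hgh i
  exact DFunLike.ext _ _ fun i ↦ DFunLike.congr_fun this i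

theorem comp_cycleGraphSucc_injective (hG : ∀ v, (G.neighborSet v).encard ≤ 2) (n : ℕ) :
    Function.Injective fun g : cycleGraph (n + 3) ↪g G ↦ g.comp (cycleGraphSucc n) := by
  intro g h hgh
  let ι : pathGraph (n + 3) →g cycleGraph (n + 3) := .ofLE pathGraph_le_cycleGraph
  have := pathGraph_hom_ext_succ (f := g.toHom.comp ι) (g := h.toHom.comp ι) hG
    g.injective h.injective fun i ↦ DFunLike.congr_fun hgh i
  exact DFunLike.ext _ _ fun i ↦ DFunLike.congr_fun this i

theorem comp_pathGraphSucc_ne_comp_cycleGraphSucc (hG : ∀ v, (G.neighborSet v).encard ≤ 2) {n : ℕ}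
    (g : pathGraph (n + 3) ↪g G) (h : cycleGraph (n + 3) ↪g G) :
    g.comp (pathGraphSucc (n + 2)) ≠ h.comp (cycleGraphSucc n) := by
  intro hgh
  let ι : pathGraph (n + 3) →g cycleGraph (n + 3) := .ofLE pathGraph_le_cycleGraph
  have heq := pathGraph_hom_ext_succ (f := g.toHom) (g := h.toHom.comp ι) hG
    g.injective h.injective fun i ↦ DFunLike.congr_fun hgh i
  have hval (i : Fin (n + 3)) : g i = h i := DFunLike.congr_fun heq i
  have hadj : G.Adj (h 0) (h (Fin.last (n + 1)).succ) :=
    h.map_adj_iff.2 (cycleGraph_adj_zero_succ.2 (.inr rfl))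
  rw [← hval, ← hval, g.map_adj_iff, pathGraph_adj_zero_succ] at hadj
  exact Fin.last_pos.ne' hadj

theorem not_isLeaf_comp_pathGraphSucc {n : ℕ} (g : pathGraph (n + 3) ↪g G) :
    ¬ IsLeaf G (g.comp (pathGraphSucc (n + 2)) 0) := by
  intro h
  have hleaf : IsLeaf (pathGraph (n + 3)) 1 :=
    IsLeaf.of_apply g (pathGraph_adj_zero_succ (i := 0).2 rfl).symm h
  simpa [Fin.ext_iff] using isLeaf_pathGraph_iff.1 hleaf

theorem card_pathGraph_embedding [Finite V] (hG : ∀ v, (G.neighborSet v).encard ≤ 2) (n : ℕ) :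
    Nat.card (pathGraph (n + 2) ↪g G) = Nat.card (pathGraph (n + 3) ↪g G) +
      Nat.card (cycleGraph (n + 3) ↪g G) +
      {f : pathGraph (n + 2) ↪g G | IsLeaf G (f 0)}.ncard := by
  let extend : (pathGraph (n + 3) ↪g G) ⊕ (cycleGraph (n + 3) ↪g G) → (pathGraph (n + 2) ↪g G) :=
    Sum.elim (fun g ↦ g.comp (pathGraphSucc (n + 2))) fun g ↦ g.comp (cycleGraphSucc n)
  have hinj : Function.Injective extend :=
    (comp_pathGraphSucc_injective hG n).sumElim (comp_cycleGraphSucc_injective hG n)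
      (comp_pathGraphSucc_ne_comp_cycleGraphSucc hG)
  have hrange : (Set.range extend)ᶜ = {f | IsLeaf G (f 0)} := by
    simp only [extend, Set.Sum.elim_range, Set.compl_union]
    ext f
    constructor
    · rintro ⟨hpath, hcycle⟩
      by_contra hf
      exact (exists_pathGraph_or_cycleGraph_extension hG f hf).elim hpath hcycle
    · intro hf
      refine ⟨?_, ?_⟩ <;> rintro ⟨g, rfl⟩
      · exact not_isLeaf_comp_pathGraphSucc g hf
      · exact not_isLeaf_embedding_cycleGraph g _ hf
  rw [← Nat.card_sum, ← Set.ncard_range_of_injective hinj, ← hrange, Set.ncard_add_ncard_compl]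

end Extension

section LeafComponents

theorem CompIsPath.ncard_supp {c : G.ConnectedComponent} {m : ℕ} (hc : CompIsPath G c m) :
    c.supp.ncard = m := by
  obtain ⟨e⟩ := hc
  rw [← Nat.card_coe_set_eq, Nat.card_congr e.toEquiv, Nat.card_fin]

theorem CompIsPath.ncard_isLeaf {c : G.ConnectedComponent} {m : ℕ} (hc : CompIsPath G c (m + 2)) :
    {v ∈ c.supp | IsLeaf G v}.ncard = 2 := by
  obtain ⟨f, hf⟩ := nonempty_induce_iso_iff.1 hc
  have hleaf (i : Fin (m + 2)) : IsLeaf G (f i) ↔ i = 0 ∨ i = Fin.last (m + 1) := by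
    rw [← isLeaf_pathGraph_iff]
    refine isLeaf_apply_iff f fun w hw ↦ hf ▸ c.mem_supp_of_adj_mem_supp ?_ hw
    exact hf ▸ ⟨i, rfl⟩
  have hends : {v ∈ c.supp | IsLeaf G v} = {f 0, f (Fin.last (m + 1))} := by
    ext v
    constructor
    · rintro ⟨hv, hvleaf⟩
      obtain ⟨i, rfl⟩ := hf ▸ hv
      rcases (hleaf i).1 hvleaf with rfl | rfl <;> simp
    · rintro (rfl | rfl)
      exacts [⟨hf ▸ ⟨_, rfl⟩, (hleaf _).2 (.inl rfl)⟩, ⟨hf ▸ ⟨_, rfl⟩, (hleaf _).2 (.inr rfl)⟩]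
  rw [hends, Set.ncard_pair (f.injective.ne Fin.last_pos.ne)]

theorem range_eq_supp_of_isLeaf (hG : ∀ v, (G.neighborSet v).encard ≤ 2) {n : ℕ}
    (f : pathGraph (n + 2) ↪g G) (h0 : IsLeaf G (f 0)) (hlast : IsLeaf G (f (Fin.last (n + 1)))) :
    Set.range f = (G.connectedComponentMk (f 0)).supp := by
  refine (supp_connectedComponentMk_eq_range (pathGraph_preconnected _) f.toHom
    (fun i w hw ↦ ?_) 0).symm
  obtain ⟨j, hj⟩ := exists_pathGraph_adj i
  refine mem_range_of_adj f (hG _) hj (fun hi ↦ ?_) hw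
  rcases isLeaf_pathGraph_iff.1 hi with rfl | rfl
  exacts [h0, hlast]

/-- An edge as an induced path on two vertices. -/
def edgeEmbedding {v w : V} (h : G.Adj v w) : pathGraph 2 ↪g G where
  toFun := ![v, w]
  inj' := by simp [Function.Injective, Fin.forall_fin_two, h.ne, h.ne']
  map_rel_iff' := by
    simpa [pathGraph_two_eq_top, Fin.forall_fin_two] using ⟨h, h.symm⟩

theorem exists_maximal_pathGraph_embedding [Finite V] {v w : V} (hvw : G.Adj v w) :
    ∃ m, ∃ f : pathGraph (m + 2) ↪g G, f (Fin.last (m + 1)) = v ∧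
      ∀ g : pathGraph (m + 3) ↪g G, g (Fin.last (m + 2)) ≠ v := by
  let lengths := {m | ∃ f : pathGraph (m + 2) ↪g G, f (Fin.last (m + 1)) = v}
  have hne : lengths.Nonempty := ⟨0, edgeEmbedding hvw.symm, rfl⟩
  have hbdd : BddAbove lengths := ⟨Nat.card V, fun m ⟨f, _⟩ ↦ by
    have := Nat.card_le_card_of_injective f f.injective
    rw [Nat.card_fin] at this
    omega⟩
  obtain ⟨f, hf⟩ := Nat.sSup_mem hne hbdd
  exact ⟨_, f, hf, fun g hg ↦ (Nat.lt_succ_self _).not_ge (le_csSup hbdd ⟨g, hg⟩)⟩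

theorem IsLeaf.exists_pathGraph_embedding [Finite V] (hG : ∀ v, (G.neighborSet v).encard ≤ 2)
    {v : V} (hv : IsLeaf G v) : ∃ m, ∃ f : pathGraph (m + 2) ↪g G,
      f 0 = v ∧ Set.range f = (G.connectedComponentMk v).supp := by
  obtain ⟨w, hw⟩ := hv.exists
  obtain ⟨m, f, rfl, hmax⟩ := exists_maximal_pathGraph_embedding hw
  have h0 : IsLeaf G (f 0) := by
    by_contra h0
    rcases exists_pathGraph_or_cycleGraph_extension hG f h0 with ⟨g, rfl⟩ | ⟨g, rfl⟩
    · exact hmax g rfl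
    · exact not_isLeaf_embedding_cycleGraph g _ hv
  let g := f.comp (pathGraphRev (m + 2)).toEmbedding
  have hg0 : g 0 = f (Fin.last (m + 1)) := congrArg f (Fin.rev_zero _)
  have hglast : g (Fin.last (m + 1)) = f 0 := congrArg f (Fin.rev_last _)
  exact ⟨m, g, hg0, hg0 ▸ range_eq_supp_of_isLeaf hG g (hg0 ▸ hv) (hglast ▸ h0)⟩

/-- The components of `G` which are paths on at least `k` vertices. -/
def pathComponents (G : SimpleGraph V) (k : ℕ) : Set G.ConnectedComponent :=
  {c | ∃ m, k ≤ m ∧ CompIsPath G c m}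

theorem image_isLeaf_pathGraph_embedding [Finite V] (hG : ∀ v, (G.neighborSet v).encard ≤ 2)
    (n : ℕ) : (fun f : pathGraph (n + 2) ↪g G ↦ f 0) '' {f | IsLeaf G (f 0)} =
      {v | IsLeaf G v ∧ G.connectedComponentMk v ∈ pathComponents G (n + 2)} := by
  ext v
  constructor
  · rintro ⟨f, hf, rfl⟩
    obtain ⟨m, g, -, hg⟩ := IsLeaf.exists_pathGraph_embedding hG hf
    have hpath : CompIsPath G (G.connectedComponentMk (f 0)) (m + 2) :=
      nonempty_induce_iso_iff.2 ⟨g, hg⟩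
    have hsub : Set.range f ⊆ (G.connectedComponentMk (f 0)).supp :=
      range_subset_supp_connectedComponentMk (pathGraph_preconnected _) f.toHom 0
    have hcard := Set.ncard_le_ncard hsub
    rw [Set.ncard_range_of_injective f.injective, Nat.card_fin, hpath.ncard_supp] at hcard
    exact ⟨hf, m + 2, hcard, hpath⟩
  · rintro ⟨hv, m', hm', hpath⟩
    obtain ⟨m, g, rfl, hg⟩ := hv.exists_pathGraph_embedding hG
    have hm : m' = m + 2 := by
      rw [← hpath.ncard_supp, ← hg, Set.ncard_range_of_injective g.injective, Nat.card_fin]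
    exact ⟨g.comp (pathGraphCastLE (hm ▸ hm')), hv, rfl⟩

theorem ncard_isLeaf_pathGraph_embedding [Finite V] (hG : ∀ v, (G.neighborSet v).encard ≤ 2)
    (n : ℕ) : {f : pathGraph (n + 2) ↪g G | IsLeaf G (f 0)}.ncard =
      (pathComponents G (n + 2)).ncard * 2 := by
  have hinj : Set.InjOn (fun f : pathGraph (n + 2) ↪g G ↦ f 0) {f | IsLeaf G (f 0)} :=
    fun _ hf _ _ h ↦ pathGraph_embedding_ext_of_isLeaf hG hf h
  rw [← hinj.ncard_image, image_isLeaf_pathGraph_embedding hG]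
  refine ncard_eq_ncard_mul_of_ncard_fiber (Set.toFinite _) (Set.toFinite _) (fun v hv ↦ hv.2) ?_
  rintro c ⟨m, hm, hc⟩
  obtain ⟨m, rfl⟩ := Nat.exists_eq_add_of_le' (hm.trans' (Nat.le_add_left 2 n))
  refine .trans (congrArg Set.ncard (Set.ext fun v ↦ ?_)) hc.ncard_isLeaf
  constructor
  · rintro ⟨⟨hv, -⟩, rfl⟩
    exact ⟨rfl, hv⟩
  · rintro ⟨rfl, hv⟩
    exact ⟨⟨hv, _, hm, hc⟩, rfl⟩

end LeafComponents

end InducedPathsAndCycles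

/-- For a graph `G` with maximum degree at most 2 and `k ≥ 3`, the number
of components of `G` that are paths with at least `k-1` vertices equals
`s(G,P_{k-1}) - s(G,P_k) - k·s(G,C_k)`. -/
theorem stmt_16 {V : Type*} [Fintype V] (G : SimpleGraph V) (k : ℕ) (hk : 3 ≤ k)
    (hdeg : ∀ v, (G.neighborSet v).ncard ≤ 2) :
    (Set.ncard {c : G.ConnectedComponent | ∃ m, k - 1 ≤ m ∧ CompIsPath G c m} : ℤ) =
      (copies G (pathGraph (k - 1)) : ℤ) - (copies G (pathGraph k) : ℤ)
        - (k : ℤ) * (copies G (cycleGraph k) : ℤ) := by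
  obtain ⟨n, rfl⟩ := Nat.exists_eq_add_of_le' hk
  have hG (v : V) : (G.neighborSet v).encard ≤ 2 := by
    rw [← (Set.toFinite _).cast_ncard_eq]
    exact_mod_cast hdeg v
  have hcount := card_pathGraph_embedding hG n
  rw [ncard_isLeaf_pathGraph_embedding hG, card_embedding_eq_copies_mul_card_iso,
    card_embedding_eq_copies_mul_card_iso, card_embedding_eq_copies_mul_card_iso,
    card_pathGraph_iso, card_pathGraph_iso, card_cycleGraph_iso] at hcount
  change ((pathComponents G (n + 2)).ncard : ℤ) = copies G (pathGraph (n + 2)) - _ - _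
  zify at hcount
  push_cast
  linarith
end

section
/- Let k ≥ 2 and let G be a finite simple graph with maximum degree at most 2 such that no connected component of G is a path with at least k−1 vertices. If 0 < s(G, P_k) ≤ 2k+1, then G has exactly one connected component with more than k vertices, and that component is a cycle with exactly s(G, P_k) vertices. -/
open SimpleGraph

/-! The vertices of a longest path in a connected graph of maximum degree at most 2 are closed under
adjacency, so the path is Hamiltonian and the graph is a path or a cycle. An induced `P_k` lies in a
single component, and the induced copies of `P_k` in a cycle with more than `k` vertices are its
arcs, one for each starting vertex. Hence `s(G, P_k)` is the total number of vertices in the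
components with more than `k` vertices; two such components would account for at least `2k + 2`
copies. -/

section Classification

variable {V : Type*} {G : SimpleGraph V}

lemma eq_univ_of_adj_closed (hG : G.Preconnected) {S : Set V} (hne : S.Nonempty)
    (hS : ∀ ⦃v w⦄, G.Adj v w → v ∈ S → w ∈ S) : S = Set.univ := by
  by_contra h
  obtain ⟨u, hu⟩ := hne
  obtain ⟨w, hw⟩ := (Set.ne_univ_iff_exists_notMem S).1 h
  obtain ⟨p⟩ := hG u w
  obtain ⟨d, -, hfst, hsnd⟩ := p.exists_boundary_dart S hu hw
  exact hsnd (hS d.adj hfst)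

lemma neighborSet_getVert_eq_pair {u v : V} {p : G.Walk u v} (hp : p.IsPath) {i : ℕ}
    (h0 : i ≠ 0) (hi : i < p.length) (hfin : (G.neighborSet (p.getVert i)).Finite)
    (hdeg : (G.neighborSet (p.getVert i)).ncard ≤ 2) :
    G.neighborSet (p.getVert i) = {p.getVert (i - 1), p.getVert (i + 1)} := by
  rw [← hp.neighborSet_toSubgraph_internal h0 hi]
  refine (Set.eq_of_subset_of_ncard_le (p.toSubgraph.neighborSet_subset _) ?_ hfin).symm
  rwa [hp.ncard_neighborSet_toSubgraph_internal_eq_two h0 hi]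

lemma mem_support_of_adj_of_forall_isPath_length_le {u v w : V} {p : G.Walk u v} (hp : p.IsPath)
    (hmax : ∀ (a b : V) (q : G.Walk a b), q.IsPath → q.length ≤ p.length) (hw : G.Adj u w) :
    w ∈ p.support := by
  by_contra hwp
  have := hmax _ _ (p.cons hw.symm) (hp.cons hwp)
  simp only [Walk.length_cons] at this
  omega

lemma exists_isHamiltonian_of_ncard_neighborSet_le_two [Finite V] [DecidableEq V]
    (hG : G.Connected) (hdeg : ∀ v, (G.neighborSet v).ncard ≤ 2) :
    ∃ (u v : V) (p : G.Walk u v), p.IsHamiltonian := by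
  have := hG.nonempty
  obtain ⟨u, v, p, hp, hmax⟩ := Walk.exists_isPath_forall_isPath_length_le_length G
  have support_adj_closed : ∀ ⦃a b⦄, G.Adj a b → a ∈ p.support → b ∈ p.support := by
    intro a b hab ha
    obtain ⟨i, rfl, hi⟩ := Walk.mem_support_iff_exists_getVert.1 ha
    rcases eq_or_ne i 0 with rfl | h0
    · exact mem_support_of_adj_of_forall_isPath_length_le hp hmax (by simpa using hab)
    rcases hi.eq_or_lt with rfl | hi
    · simpa using mem_support_of_adj_of_forall_isPath_length_le (p := p.reverse) hp.reverse
        (by simpa using hmax) (by simpa using hab)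
    · have hb : b ∈ G.neighborSet (p.getVert i) := hab
      rw [neighborSet_getVert_eq_pair hp h0 hi (Set.toFinite _) (hdeg _)] at hb
      rcases hb with rfl | rfl <;> exact p.getVert_mem_support _
  have support_eq_univ : {w | w ∈ p.support} = Set.univ :=
    eq_univ_of_adj_closed hG.preconnected ⟨u, p.start_mem_support⟩ support_adj_closed
  exact ⟨u, v, p, hp.isHamiltonian_of_mem (Set.eq_univ_iff_forall.1 support_eq_univ)⟩

lemma simpleGraph_ext_of_forall_lt {α : Type*} [LinearOrder α] {G H : SimpleGraph α}
    (h : ∀ a b, a < b → (G.Adj a b ↔ H.Adj a b)) : G = H := by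
  ext a b
  rcases lt_trichotomy a b with hab | rfl | hab
  · exact h a b hab
  · simp
  · rw [G.adj_comm, H.adj_comm, h b a hab]

lemma pathGraph_adj_of_lt {n : ℕ} {i j : Fin n} (hij : i < j) :
    (pathGraph n).Adj i j ↔ (i : ℕ) + 1 = j := by
  rw [pathGraph_adj]
  omega

lemma cycleGraph_adj_of_lt {n : ℕ} {i j : Fin n} (hij : i < j) :
    (cycleGraph n).Adj i j ↔ (i : ℕ) + 1 = j ∨ (i : ℕ) = 0 ∧ (j : ℕ) + 1 = n := by
  rw [cycleGraph_adj', Fin.sub_val_of_le hij.le, Fin.coe_sub_iff_lt.2 hij]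
  omega

lemma eq_succ_or_succ_eq_of_adj {n : ℕ} {H : SimpleGraph (Fin n)} (hpath : pathGraph n ≤ H)
    {v w : Fin n} (hdeg : (H.neighborSet v).ncard ≤ 2) (hvw : H.Adj v w) (h0 : (v : ℕ) ≠ 0)
    (hn : (v : ℕ) + 1 ≠ n) : (v : ℕ) = w + 1 ∨ (v : ℕ) + 1 = w := by
  let pred : Fin n := ⟨v - 1, by omega⟩
  let succ : Fin n := ⟨v + 1, by omega⟩
  have hpred : H.Adj v pred := hpath (pathGraph_adj.2 (Or.inr (Nat.sub_add_cancel (by omega))))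
  have hsucc : H.Adj v succ := hpath (pathGraph_adj.2 (Or.inl rfl))
  have hnbrs : {pred, succ} = H.neighborSet v := by
    refine Set.eq_of_subset_of_ncard_le (by rintro _ (rfl | rfl) <;> assumption) ?_
    rwa [Set.ncard_pair (by simp only [pred, succ, ne_eq, Fin.mk.injEq]; omega)]
  have hw : w ∈ ({pred, succ} : Set (Fin n)) := hnbrs ▸ hvw
  rcases hw with rfl | rfl
  · exact Or.inl (by simp only [pred]; omega)
  · exact Or.inr rfl

lemma succ_eq_or_ends_of_adj_of_lt {n : ℕ} {H : SimpleGraph (Fin n)} (hpath : pathGraph n ≤ H)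
    (hdeg : ∀ v, (H.neighborSet v).ncard ≤ 2) {i j : Fin n} (hij : i < j) (hadj : H.Adj i j) :
    (i : ℕ) + 1 = j ∨ (i : ℕ) = 0 ∧ (j : ℕ) + 1 = n := by
  by_cases hi : (i : ℕ) = 0
  · by_cases hj : (j : ℕ) + 1 = n
    · exact Or.inr ⟨hi, hj⟩
    · have := eq_succ_or_succ_eq_of_adj hpath (hdeg j) hadj.symm (by omega) hj
      omega
  · have := eq_succ_or_succ_eq_of_adj hpath (hdeg i) hadj hi (by omega)
    omega

lemma eq_pathGraph_or_eq_cycleGraph_of_pathGraph_le {n : ℕ} {H : SimpleGraph (Fin n)}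
    (hpath : pathGraph n ≤ H) (hdeg : ∀ v, (H.neighborSet v).ncard ≤ 2) :
    H = pathGraph n ∨ 3 ≤ n ∧ H = cycleGraph n := by
  by_cases hends : 3 ≤ n ∧ ∀ i j : Fin n, (i : ℕ) = 0 → (j : ℕ) + 1 = n → H.Adj i j
  · refine Or.inr ⟨hends.1, simpleGraph_ext_of_forall_lt fun i j hij => ?_⟩
    rw [cycleGraph_adj_of_lt hij]
    refine ⟨succ_eq_or_ends_of_adj_of_lt hpath hdeg hij, ?_⟩
    rintro (h | ⟨hi, hj⟩)
    · exact hpath (pathGraph_adj.2 (Or.inl h))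
    · exact hends.2 i j hi hj
  · refine Or.inl (le_antisymm (fun i j hadj => ?_) hpath)
    wlog hij : i < j generalizing i j
    · exact (this j i hadj.symm (lt_of_le_of_ne (not_lt.1 hij) hadj.ne')).symm
    rw [pathGraph_adj_of_lt hij]
    rcases succ_eq_or_ends_of_adj_of_lt hpath hdeg hij hadj with h | ⟨hi, hj⟩
    · exact h
    have hn : ¬ 3 ≤ n := by
      refine fun hn => hends ⟨hn, fun i' j' hi' hj' => ?_⟩
      rwa [show i' = i by omega, show j' = j by omega]
    omega

lemma ncard_neighborSet_le_of_embedding {W : Type*} {H : SimpleGraph W} [Finite W] (f : G ↪g H)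
    (v : V) : (G.neighborSet v).ncard ≤ (H.neighborSet (f v)).ncard :=
  Nat.card_le_card_of_injective _ (f.mapNeighborSet v).injective

theorem nonempty_iso_pathGraph_or_cycleGraph [Finite V] (hG : G.Connected)
    (hdeg : ∀ v, (G.neighborSet v).ncard ≤ 2) :
    Nonempty (G ≃g pathGraph (Nat.card V)) ∨
      3 ≤ Nat.card V ∧ Nonempty (G ≃g cycleGraph (Nat.card V)) := by
  classical
  obtain ⟨u, v, p, hp⟩ := exists_isHamiltonian_of_ncard_neighborSet_le_two hG hdeg
  let e := hp.getVertEquiv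
  have hcard : Nat.card V = p.support.length := by simpa using (Nat.card_congr e).symm
  have hpath : pathGraph p.support.length ≤ G.comap e := by
    intro i j hij
    wlog h : i < j generalizing i j
    · exact (this hij.symm (lt_of_le_of_ne (not_lt.1 h) hij.ne')).symm
    rw [pathGraph_adj_of_lt h] at hij
    have hi : (i : ℕ) < p.length := by have := p.length_support; omega
    simpa [e, hij] using p.adj_getVert_succ hi
  have iso : G.comap e ≃g G := Iso.comap e G
  rw [hcard]
  refine (eq_pathGraph_or_eq_cycleGraph_of_pathGraph_le hpath fun i =>
    (ncard_neighborSet_le_of_embedding iso.toEmbedding i).trans (hdeg _)).imp (fun h => ?_)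
      (And.imp_right fun h => ?_)
  all_goals exact ⟨h ▸ iso.symm⟩

theorem compIsPath_or_compIsCycle [Finite V] (hdeg : ∀ v, (G.neighborSet v).ncard ≤ 2)
    (c : G.ConnectedComponent) :
    CompIsPath G c c.supp.ncard ∨ CompIsCycle G c c.supp.ncard :=
  nonempty_iso_pathGraph_or_cycleGraph c.connected_toSimpleGraph fun v =>
    (ncard_neighborSet_le_of_embedding (Embedding.induce c.supp) v).trans (hdeg _)

end Classification

section InducedCopies

variable {V W X : Type*} {G : SimpleGraph V} {G' : SimpleGraph W} {H : SimpleGraph X}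

/-- The vertex sets of the induced copies of `H` in `G`, as sets rather than the finsets counted by
`copies`, so that they can be transported along graph embeddings. -/
def inducedCopies (G : SimpleGraph V) (H : SimpleGraph X) : Set (Set V) :=
  {S | Nonempty (G.induce S ≃g H)}

lemma mem_inducedCopies_iff_exists_embedding {S : Set V} :
    S ∈ inducedCopies G H ↔ ∃ f : H ↪g G, Set.range f = S := by
  constructor
  · rintro ⟨e⟩
    refine ⟨(Embedding.induce S).comp e.symm.toEmbedding, ?_⟩
    exact (e.symm.surjective.range_comp _).trans Subtype.range_coe
  · rintro ⟨f, rfl⟩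
    exact ⟨f.isoInduceRange.symm⟩

lemma copies_eq_ncard_inducedCopies [Fintype V] (G : SimpleGraph V) (H : SimpleGraph X) :
    copies G H = (inducedCopies G H).ncard := by
  have image_coe : inducedCopies G H =
      (fun s : Finset V => (s : Set V)) '' {s | Nonempty (G.induce (s : Set V) ≃g H)} := by
    ext S
    lift S to Finset V using S.toFinite
    simp [inducedCopies]
  rw [image_coe, Set.ncard_image_of_injective _ Finset.coe_injective, copies]

lemma image_inducedCopies_of_embedding (f : G ↪g G') :
    Set.image f '' inducedCopies G H = {S ∈ inducedCopies G' H | S ⊆ Set.range f} := by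
  ext S
  simp only [Set.mem_image, Set.mem_ofPred_eq, mem_inducedCopies_iff_exists_embedding]
  constructor
  · rintro ⟨_, ⟨g, rfl⟩, rfl⟩
    exact ⟨⟨f.comp g, Set.range_comp f g⟩, Set.image_subset_range f _⟩
  · rintro ⟨⟨g, rfl⟩, hg⟩
    choose h hh using fun x => hg (Set.mem_range_self x)
    refine ⟨_, ⟨⟨⟨h, fun x y hxy => g.injective ?_⟩, fun {x y} => ?_⟩, rfl⟩, ?_⟩
    · rw [← hh x, ← hh y, hxy]
    · rw [← g.map_adj_iff, ← hh x, ← hh y, f.map_adj_iff]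
      rfl
    · rw [← Set.range_comp]
      exact congrArg Set.range (funext hh)

lemma ncard_inducedCopies_of_embedding (f : G ↪g G') :
    (inducedCopies G H).ncard = {S ∈ inducedCopies G' H | S ⊆ Set.range f}.ncard := by
  rw [← image_inducedCopies_of_embedding f,
    Set.ncard_image_of_injective _ f.injective.image_injective]

lemma ncard_inducedCopies_congr (e : G ≃g G') :
    (inducedCopies G H).ncard = (inducedCopies G' H).ncard := by
  rw [ncard_inducedCopies_of_embedding e.toEmbedding]
  simp [e.surjective.range_eq]

lemma inducedCopies_eq_empty_of_card_lt [Finite V] (h : Nat.card V < Nat.card X) :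
    inducedCopies G H = ∅ := by
  refine Set.eq_empty_of_forall_notMem fun S hS => h.not_ge ?_
  obtain ⟨f, -⟩ := mem_inducedCopies_iff_exists_embedding.1 hS
  exact Nat.card_le_card_of_injective f f.injective

lemma exists_subset_supp_of_mem_inducedCopies (hH : H.Connected) {S : Set V}
    (hS : S ∈ inducedCopies G H) : ∃ c : G.ConnectedComponent, S ⊆ c.supp := by
  obtain ⟨f, rfl⟩ := mem_inducedCopies_iff_exists_embedding.1 hS
  obtain ⟨x⟩ := hH.nonempty
  refine ⟨G.connectedComponentMk (f x), ?_⟩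
  rintro _ ⟨y, rfl⟩
  exact ConnectedComponent.sound ((hH.preconnected y x).map f.toHom)

lemma ncard_inducedCopies_eq_sum_connectedComponent [Finite V] [Fintype G.ConnectedComponent]
    (hH : H.Connected) :
    (inducedCopies G H).ncard =
      ∑ c : G.ConnectedComponent, (inducedCopies (G.induce c.supp) H).ncard := by
  have iUnion_eq : inducedCopies G H =
      ⋃ c : G.ConnectedComponent, {S ∈ inducedCopies G H | S ⊆ c.supp} := by
    ext S
    simpa using exists_subset_supp_of_mem_inducedCopies hH
  have pairwise_disjoint : Pairwise fun c c' : G.ConnectedComponent =>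
      Disjoint {S ∈ inducedCopies G H | S ⊆ c.supp} {S ∈ inducedCopies G H | S ⊆ c'.supp} := by
    refine fun c c' hne => Set.disjoint_left.2 ?_
    rintro S ⟨⟨e⟩, hc⟩ ⟨-, hc'⟩
    obtain ⟨v⟩ := e.symm.connected_iff.1 hH |>.nonempty
    exact hne (ConnectedComponent.eq_of_common_vertex (hc v.2) (hc' v.2))
  rw [iUnion_eq, Set.ncard_iUnion_of_finite (fun _ => Set.toFinite _) pairwise_disjoint,
    finsum_eq_sum_of_fintype]
  refine Finset.sum_congr rfl fun c _ => ?_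
  rw [ncard_inducedCopies_of_embedding (Embedding.induce c.supp)]
  exact congrArg (fun t => {S ∈ inducedCopies G H | S ⊆ t}.ncard) Subtype.range_coe.symm

end InducedCopies

section CycleGraph

/-- The arc `{x, x + 1, …, x + k - 1}` of the cyclic order on `Fin m`; for `k ≥ m` it is the whole
circle. -/
def arc {m : ℕ} (x : Fin m) (k : ℕ) : Set (Fin m) :=
  {y | (y - x).val < k}

variable {n k : ℕ}

lemma mem_arc {m : ℕ} {x y : Fin m} : y ∈ arc x k ↔ (y - x).val < k :=
  Iff.rfl

lemma arc_eq_range (x : Fin (n + 1)) (hk : k ≤ n + 1) :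
    arc x k = Set.range fun i : Fin k => x + Fin.castLE hk i := by
  ext y
  constructor
  · intro hy
    exact ⟨⟨_, hy⟩, add_sub_cancel x y⟩
  · rintro ⟨i, rfl⟩
    simp [mem_arc]

lemma ncard_arc (x : Fin (n + 1)) (hk : k ≤ n + 1) : (arc x k).ncard = k := by
  rw [arc_eq_range x hk, Set.ncard_range_of_injective, Nat.card_fin]
  exact (add_right_injective x).comp (Fin.castLE_injective hk)

lemma sub_one_mem_arc_iff {x y : Fin (n + 1)} (hk : k ≤ n) (hy : y ∈ arc x k) :
    y - 1 ∈ arc x k ↔ y ≠ x := by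
  have hval : (y - 1 - x).val = if y = x then n else (y - x).val - 1 := by
    rw [sub_right_comm, Fin.coe_sub_one]
    simp only [sub_eq_zero]
  rw [mem_arc] at hy
  rw [mem_arc, hval]
  split_ifs with h
  · simpa [h] using hk
  · simp only [ne_eq, h, not_false_eq_true, iff_true]
    omega

lemma arc_injective (h0 : 0 < k) (hk : k ≤ n) :
    Function.Injective fun x : Fin (n + 1) => arc x k := by
  intro x y (hxy : arc x k = arc y k)
  have hx : x ∈ arc x k := by simpa [mem_arc] using h0
  by_contra hne
  have hpred : x - 1 ∈ arc y k := (sub_one_mem_arc_iff hk (hxy ▸ hx)).2 hne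
  exact (sub_one_mem_arc_iff hk hx).1 (hxy ▸ hpred) rfl

lemma exists_mem_sub_one_notMem {s : Set (Fin (n + 1))} (hne : s.Nonempty) (huniv : s ≠ Set.univ) :
    ∃ x ∈ s, x - 1 ∉ s := by
  by_contra! hclosed
  obtain ⟨x, hx⟩ := hne
  refine huniv (Set.eq_univ_of_forall fun y => ?_)
  have sub_mem : ∀ d : Fin (n + 1), x - d ∈ s := by
    intro d
    induction d using Fin.induction with
    | zero => simpa using hx
    | succ d ih => simpa [← Fin.coeSucc_eq_succ, ← sub_sub] using hclosed _ ih
  simpa using sub_mem (x - y)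

lemma mem_arc_of_cycleGraph_adj {x v w : Fin (n + 2)} (hk : k ≤ n + 1)
    (hadj : (cycleGraph (n + 2)).Adj v w) (hv : v ∈ arc x k) (hpred : w ≠ x - 1)
    (hsucc : (w - x).val ≠ k) : w ∈ arc x k := by
  rcases cycleGraph_adj.1 hadj with h | h
  · obtain rfl : w = v - 1 := by rw [← h, sub_sub_cancel]
    refine (sub_one_mem_arc_iff hk hv).2 ?_
    rintro rfl
    exact hpred rfl
  · obtain rfl : w = v + 1 := by rw [← h, add_sub_cancel]
    refine lt_of_le_of_ne ?_ hsucc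
    have hlt : v - x < Fin.last (n + 1) := Fin.lt_def.2 (lt_of_lt_of_le hv hk)
    rw [add_sub_right_comm, Fin.val_add_one_of_lt hlt]
    exact hv

/-- Follow the cycle forwards from a vertex of `s` whose predecessor is not in `s`, up to the first
vertex outside `s`: no edge of the cycle leaves this arc inside `s`. -/
lemma eq_arc_of_preconnected_induce {s : Set (Fin (n + 2))}
    (hs : ((cycleGraph (n + 2)).induce s).Preconnected) (hne : s.Nonempty) (huniv : s ≠ Set.univ) :
    ∃ x, s = arc x s.ncard := by
  obtain ⟨x, hx, hpred⟩ := exists_mem_sub_one_notMem hne huniv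
  obtain ⟨y, hy⟩ := (Set.ne_univ_iff_exists_notMem s).1 huniv
  obtain ⟨j, hj, hmin⟩ := exists_minimal_of_wellFoundedLT (fun j => x + j ∉ s)
    ⟨y - x, by simpa using hy⟩
  have arc_subset : arc x j ⊆ s := by
    intro z hz
    by_contra hzs
    exact (hmin (y := z - x) (by simpa using hzs) hz.le).not_gt hz
  have arc_adj_closed : ∀ ⦃v w : s⦄, ((cycleGraph (n + 2)).induce s).Adj v w →
      v.1 ∈ arc x j → w.1 ∈ arc x j := by
    refine fun v w hadj hv => mem_arc_of_cycleGraph_adj (by omega) hadj hv ?_ fun hwj => hj ?_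
    · exact fun h => hpred (h ▸ w.2)
    · rw [← Fin.ext hwj, add_sub_cancel]
      exact w.2
  have hj0 : 0 < j.val := by
    refine Nat.pos_of_ne_zero fun h => hj ?_
    rwa [Fin.ext (b := 0) h, add_zero]
  have coe_mem_arc : {v : s | v.1 ∈ arc x j} = Set.univ :=
    eq_univ_of_adj_closed hs ⟨⟨x, hx⟩, by simpa [mem_arc] using hj0⟩ arc_adj_closed
  have eq_arc : s = arc x j :=
    Set.Subset.antisymm (fun v hv => Set.eq_univ_iff_forall.1 coe_mem_arc ⟨v, hv⟩) arc_subset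
  have hcard : s.ncard = j := by
    rw [eq_arc, ncard_arc x j.is_lt.le]
  exact ⟨x, hcard ▸ eq_arc⟩

lemma range_ne_univ_of_embedding_pathGraph_cycleGraph (f : pathGraph k ↪g cycleGraph (n + 3)) :
    Set.range f ≠ Set.univ := by
  intro huniv
  obtain ⟨i, -⟩ := Set.range_eq_univ.1 huniv 0
  have : NeZero k := ⟨by rintro rfl; exact i.elim0⟩
  have val_eq_one : ∀ i, (cycleGraph (n + 3)).Adj (f 0) (f i) → i.val = 1 := by
    intro i hi
    simpa [pathGraph_adj, eq_comm] using f.map_adj_iff.1 hi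
  obtain ⟨a, ha⟩ := Set.range_eq_univ.1 huniv (f 0 + 1)
  obtain ⟨b, hb⟩ := Set.range_eq_univ.1 huniv (f 0 - 1)
  have hab : a = b := by
    refine Fin.ext ((val_eq_one a ?_).trans (val_eq_one b ?_).symm)
    · simp [ha, cycleGraph_adj]
    · simp [hb, cycleGraph_adj]
  rw [← hab, ha, sub_eq_add_neg, add_right_inj, eq_neg_iff_add_eq_zero] at hb
  exact absurd (congrArg Fin.val hb) (by simp [Fin.val_add, Nat.mod_eq_of_lt])

lemma arc_mem_inducedCopies (x : Fin (n + 1)) (hk : k ≤ n) :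
    arc x k ∈ inducedCopies (cycleGraph (n + 1)) (pathGraph k) := by
  refine mem_inducedCopies_iff_exists_embedding.2
    ⟨⟨⟨fun i => x + Fin.castLE (by omega) i, ?_⟩, fun {i j} => ?_⟩,
      (arc_eq_range x (by omega)).symm⟩
  · exact (add_right_injective x).comp (Fin.castLE_injective _)
  · wlog hij : i < j generalizing i j
    · rcases eq_or_lt_of_le (not_lt.1 hij) with rfl | hji
      · simp
      · rw [SimpleGraph.adj_comm, this hji, SimpleGraph.adj_comm]
    rw [pathGraph_adj_of_lt hij]
    change (cycleGraph (n + 1)).Adj (x + Fin.castLE _ i) (x + Fin.castLE _ j) ↔ _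
    rw [cycleGraph_adj', add_sub_add_left_eq_sub, add_sub_add_left_eq_sub, ← cycleGraph_adj',
      cycleGraph_adj_of_lt (by simpa using hij)]
    simp only [Fin.val_castLE]
    omega

lemma inducedCopies_cycleGraph_pathGraph (h0 : 0 < k) (hk : k < n + 3) :
    inducedCopies (cycleGraph (n + 3)) (pathGraph k) = Set.range fun x => arc x k := by
  ext s
  constructor
  · intro hs
    obtain ⟨f, rfl⟩ := mem_inducedCopies_iff_exists_embedding.1 hs
    have : NeZero k := ⟨h0.ne'⟩
    obtain ⟨x, hx⟩ := eq_arc_of_preconnected_induce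
      (f.isoInduceRange.preconnected_iff.1 (pathGraph_preconnected k)) (Set.range_nonempty f)
      (range_ne_univ_of_embedding_pathGraph_cycleGraph f)
    rw [Set.ncard_range_of_injective f.injective, Nat.card_fin] at hx
    exact ⟨x, hx.symm⟩
  · rintro ⟨x, rfl⟩
    exact arc_mem_inducedCopies x (by omega)

lemma ncard_inducedCopies_cycleGraph_pathGraph {m : ℕ} (h0 : 0 < k) (hm : 3 ≤ m) :
    (inducedCopies (cycleGraph m) (pathGraph k)).ncard = if k < m then m else 0 := by
  obtain ⟨n, rfl⟩ := Nat.exists_eq_add_of_le' hm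
  split_ifs with hk
  · rw [inducedCopies_cycleGraph_pathGraph h0 hk,
      Set.ncard_range_of_injective (arc_injective h0 (by omega)), Nat.card_fin]
  · rw [Set.ncard_eq_zero]
    refine Set.eq_empty_of_forall_notMem fun s hs => ?_
    obtain ⟨f, -⟩ := mem_inducedCopies_iff_exists_embedding.1 hs
    refine range_ne_univ_of_embedding_pathGraph_cycleGraph f
      (Set.eq_of_subset_of_ncard_le (Set.subset_univ _) ?_)
    rwa [Set.ncard_range_of_injective f.injective, Set.ncard_univ, Nat.card_fin, Nat.card_fin,
      ← not_lt]

end CycleGraph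

section MaxDegreeTwo

variable {V : Type*} {G : SimpleGraph V} {k : ℕ}

lemma ncard_inducedCopies_induce_supp [Finite V] (hk : 0 < k)
    (hdeg : ∀ v, (G.neighborSet v).ncard ≤ 2)
    {c : G.ConnectedComponent} (hnopath : ∀ m, k ≤ m → ¬ CompIsPath G c m) :
    (inducedCopies (G.induce c.supp) (pathGraph k)).ncard =
      if k < c.supp.ncard then c.supp.ncard else 0 := by
  rcases compIsPath_or_compIsCycle hdeg c with hpath | ⟨hm, ⟨e⟩⟩
  · have hlt : c.supp.ncard < k := not_le.1 fun h => hnopath _ h hpath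
    rw [if_neg hlt.not_gt, inducedCopies_eq_empty_of_card_lt, Set.ncard_empty]
    rwa [Nat.card_fin]
  · rw [ncard_inducedCopies_congr e, ncard_inducedCopies_cycleGraph_pathGraph hk hm]

theorem copies_pathGraph_eq_sum [Fintype V] [Fintype G.ConnectedComponent] (hk : 0 < k)
    (hdeg : ∀ v, (G.neighborSet v).ncard ≤ 2)
    (hnopath : ∀ (c : G.ConnectedComponent) (m : ℕ), k ≤ m → ¬ CompIsPath G c m) :
    copies G (pathGraph k) =
      ∑ c : G.ConnectedComponent, if k < c.supp.ncard then c.supp.ncard else 0 := by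
  have : NeZero k := ⟨hk.ne'⟩
  rw [copies_eq_ncard_inducedCopies, ncard_inducedCopies_eq_sum_connectedComponent
    ⟨pathGraph_preconnected k⟩]
  exact Finset.sum_congr rfl fun c _ => ncard_inducedCopies_induce_supp hk hdeg (hnopath c)

end MaxDegreeTwo

theorem stmt_17_general {V : Type*} [Fintype V] (G : SimpleGraph V) (k : ℕ) (hk : 0 < k)
    (hdeg : ∀ v, (G.neighborSet v).ncard ≤ 2)
    (hnopath : ∀ (c : G.ConnectedComponent) (m : ℕ), k ≤ m → ¬ CompIsPath G c m)
    (hpos : 0 < copies G (pathGraph k)) (hle : copies G (pathGraph k) ≤ 2 * k + 1) :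
    ∃ c : G.ConnectedComponent,
      (k < c.supp.ncard ∧ CompIsCycle G c (copies G (pathGraph k))) ∧
      ∀ c' : G.ConnectedComponent, k < c'.supp.ncard → c' = c := by
  classical
  have hsum := copies_pathGraph_eq_sum hk hdeg hnopath
  obtain ⟨c, -, hc⟩ := Finset.exists_ne_zero_of_sum_ne_zero (hsum ▸ hpos.ne')
  have hkc : k < c.supp.ncard := by
    by_contra h
    exact hc (if_neg h)
  have unique : ∀ c' : G.ConnectedComponent, k < c'.supp.ncard → c' = c := by
    intro c' hkc'
    by_contra hne
    have pair_le : c'.supp.ncard + c.supp.ncard ≤ copies G (pathGraph k) := calc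
      _ = ∑ d ∈ ({c', c} : Finset G.ConnectedComponent),
          if k < d.supp.ncard then d.supp.ncard else 0 := by
        rw [Finset.sum_pair hne, if_pos hkc', if_pos hkc]
      _ ≤ ∑ d : G.ConnectedComponent, if k < d.supp.ncard then d.supp.ncard else 0 :=
        Finset.sum_le_univ_sum_of_nonneg fun _ => Nat.zero_le _
      _ = copies G (pathGraph k) := hsum.symm
    omega
  have copies_eq : copies G (pathGraph k) = c.supp.ncard := by
    rw [hsum, Fintype.sum_eq_single c fun c' hne => if_neg (mt (unique c') hne), if_pos hkc]
  refine ⟨c, ⟨hkc, ?_⟩, unique⟩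
  rw [copies_eq]
  exact (compIsPath_or_compIsCycle hdeg c).resolve_left (hnopath c _ hkc.le)

/-- Let `k ≥ 2` and let `G` have maximum degree at most 2 and no component
that is a path with at least `k-1` vertices. If `0 < s(G,P_k) ≤ 2k+1`, then `G` has
exactly one component with more than `k` vertices, and it is a cycle with `s(G,P_k)`
vertices. -/
theorem stmt_17 {V : Type*} [Fintype V] (G : SimpleGraph V) (k : ℕ) (hk : 2 ≤ k)
    (hdeg : ∀ v, (G.neighborSet v).ncard ≤ 2)
    (hnopath : ∀ (c : G.ConnectedComponent) (m : ℕ), k - 1 ≤ m → ¬ CompIsPath G c m)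
    (hpos : 0 < copies G (pathGraph k)) (hle : copies G (pathGraph k) ≤ 2 * k + 1) :
    ∃ c : G.ConnectedComponent,
      (k < c.supp.ncard ∧ CompIsCycle G c (copies G (pathGraph k))) ∧
      ∀ c' : G.ConnectedComponent, k < c'.supp.ncard → c' = c :=
  stmt_17_general G k (by omega) hdeg (fun c m hm => hnopath c m (by omega)) hpos hle
end
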